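/- arXiv:0802.3571 — 3 statements merged into one kernel-verified Lean document; each statement's English description precedes it below -/
import Mathlib

section
/- For every n ≥ 1 and every word w = (b₀, …, b_{n−1}) ∈ Bₙ, the first digit b₀ lies in {a₁, a₂}, and there exists an integer i with 0 ≤ i < n such that the image of Δ(w) under the n-th iterate of T equals the interval [0, Tⁱ(a₂ − a₁)) or the interval [0, Tⁱ(βa₁ − a₂)), where Tⁱ denotes the i-th iterate of T applied to the indicated point. -/
/-!
The map `T^|w|` is affine on `Δ(w)`, with image an interval `[0, c)`. Let `T` map the digit
interval `Δ(b) = [p, q)` onto `[0, d)`. Appending `b` to `w` turns `c` into `min d (β (c - p))`.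
If the minimum is `β (c - p) < d`, then `c` lies in `Δ(b)` as soon as the new cylinder is
nonempty, and the new endpoint is `T c`. Otherwise it is `d`, which is one of `a₁`, `a₂ - a₁` and
`β a₁ - a₂`; the value `a₁` means that the cylinder is full. Hence along a word all of whose
nonempty prefixes are non-full, the endpoint either moves by `T` or restarts at one of the two
critical values.
-/

open MeasureTheory Set

/-- The greedy β-transformation with deleted digit set `{0, a₁, a₂}`:
`T x = βx` on `Δ(0) = [0, a₁/β)`, `T x = βx − a₁` on `Δ(a₁) = [a₁/β, a₂/β)`,
and `T x = βx − a₂` on `Δ(a₂) = [a₂/β, a₁)`. -/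
noncomputable def greedyT (β a₁ a₂ : ℝ) (x : ℝ) : ℝ :=
  if x < a₁ / β then β * x
  else if x < a₂ / β then β * x - a₁
  else β * x - a₂

/-- The interval `Δ(b)` associated to a digit `b ∈ {0, a₁, a₂}`. -/
noncomputable def digitInt (β a₁ a₂ : ℝ) (b : ℝ) : Set ℝ :=
  if b = 0 then Set.Ico 0 (a₁ / β)
  else if b = a₁ then Set.Ico (a₁ / β) (a₂ / β)
  else Set.Ico (a₂ / β) a₁

/-- The fundamental interval `Δ(w) = ⋂_{k < n} T⁻ᵏ Δ(b_k)` of a word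
`w = (b₀, …, b_{n−1})`. -/
noncomputable def cyl (β a₁ a₂ : ℝ) (w : List ℝ) : Set ℝ :=
  ⋂ k ∈ Finset.range w.length,
    (greedyT β a₁ a₂)^[k] ⁻¹' digitInt β a₁ a₂ (w.getD k 0)

/-- `w` is a word over the alphabet `A = {0, a₁, a₂}`. -/
def isWord (a₁ a₂ : ℝ) (w : List ℝ) : Prop := ∀ b ∈ w, b = 0 ∨ b = a₁ ∨ b = a₂

/-- The fundamental interval `Δ(w)` is full: `λ(Δ(w)) = a₁/β^|w|`. -/
def isFull (β a₁ a₂ : ℝ) (w : List ℝ) : Prop :=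
  volume (cyl β a₁ a₂ w) = ENNReal.ofReal (a₁ / β ^ w.length)

/-- Condition (6): `a₁ · max (β−1) 1 < a₂ < a₁ · min 2 β`. -/
def condition6 (β a₁ a₂ : ℝ) : Prop :=
  a₁ * max (β - 1) 1 < a₂ ∧ a₂ < a₁ * min 2 β

/-- `w ∈ Bₙ`: `w` is a word of length `n` over `A` with `λ(Δ(w)) > 0`, `Δ(w)`
non-full, and `Δ(w′)` non-full for every nonempty proper prefix `w′` of `w`. -/
def memB (β a₁ a₂ : ℝ) (n : ℕ) (w : List ℝ) : Prop :=
  w.length = n ∧ isWord a₁ a₂ w ∧ 0 < volume (cyl β a₁ a₂ w) ∧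
    ¬ isFull β a₁ a₂ w ∧
    ∀ w' : List ℝ, w' ≠ [] → w' <+: w → w' ≠ w → ¬ isFull β a₁ a₂ w'

/-- `κ(n)`: the number of elements of `Bₙ`. -/
noncomputable def kappa (β a₁ a₂ : ℝ) (n : ℕ) : ℕ :=
  {w : List ℝ | memB β a₁ a₂ n w}.ncard

section AffineBranch

/-- The map `f` sends `s` affinely, with slope `m` and zero at `l`, onto the interval `[0, c)`.
For `0 < m` the set `s` is `[l, l + c / m)`; it is written as a preimage because composition of
branches then needs no division. -/
def IsAffineBranch (f : ℝ → ℝ) (s : Set ℝ) (m l c : ℝ) : Prop :=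
  s = (fun x => m * (x - l)) ⁻¹' Ico 0 c ∧ EqOn f (fun x => m * (x - l)) s

variable {f g : ℝ → ℝ} {s t : Set ℝ} {m l c k p d : ℝ}

lemma isAffineBranch_Ico {r : ℝ} (hm : 0 < m) (hf : ∀ x ∈ Ico l r, f x = m * (x - l)) :
    IsAffineBranch f (Ico l r) m l (m * (r - l)) := by
  refine ⟨?_, hf⟩
  ext x
  simp only [mem_Ico, mem_preimage, mul_nonneg_iff_of_pos_left hm, mul_lt_mul_iff_right₀ hm,
    sub_nonneg, sub_lt_sub_iff_right]

lemma IsAffineBranch.volume_eq (h : IsAffineBranch f s m l c) (hm : 0 < m) :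
    volume s = ENNReal.ofReal (c / m) := by
  have hs : s = Ico l (l + c / m) := by
    rw [h.1]
    ext x
    rw [mem_preimage, mem_Ico, mem_Ico, mul_nonneg_iff_of_pos_left hm, sub_nonneg,
      ← lt_div_iff₀' hm, sub_lt_iff_lt_add']
  rw [hs, Real.volume_Ico, add_sub_cancel_left]

lemma IsAffineBranch.image_eq (h : IsAffineBranch f s m l c) (hm : m ≠ 0) :
    f '' s = Ico 0 c := by
  have hsurj : Function.Surjective fun x => m * (x - l) :=
    fun y => ⟨l + y / m, by field_simp; ring⟩
  rw [h.2.image_eq, h.1, image_preimage_eq _ hsurj]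

lemma IsAffineBranch.comp (hg : IsAffineBranch g t k p d) (hf : IsAffineBranch f s m l c)
    (hk : 0 < k) (hm : m ≠ 0) (hp : 0 ≤ p) :
    IsAffineBranch (g ∘ f) (s ∩ f ⁻¹' t) (k * m) (l + p / m) (min d (k * (c - p))) := by
  have hcomp (x : ℝ) : k * m * (x - (l + p / m)) = k * (m * (x - l) - p) := by
    field_simp
    ring
  constructor
  · have hpre : s ∩ f ⁻¹' t = s ∩ (fun x => m * (x - l)) ⁻¹' t := hf.2.inter_preimage_eq t
    rw [hpre, hf.1, hg.1]
    ext x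
    simp only [mem_inter_iff, mem_preimage, mem_Ico, hcomp, lt_min_iff,
      mul_nonneg_iff_of_pos_left hk, mul_lt_mul_iff_right₀ hk, sub_nonneg, sub_lt_sub_iff_right]
    constructor
    · rintro ⟨⟨-, hc⟩, hpx, hd⟩
      exact ⟨hpx, hd, hc⟩
    · rintro ⟨hpx, hd, hc⟩
      exact ⟨⟨hp.trans hpx, hc⟩, hpx, hd⟩
  · rintro x ⟨hxs, hxt⟩
    calc g (f x) = k * (f x - p) := hg.2 hxt
      _ = k * (m * (x - l) - p) := by rw [hf.2 hxs]
      _ = k * m * (x - (l + p / m)) := (hcomp x).symm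

lemma IsAffineBranch.min_eq_or_eq_apply (hg : IsAffineBranch g t k p d)
    (hpos : 0 ≤ min d (k * (c - p))) :
    min d (k * (c - p)) = d ∨ min d (k * (c - p)) = g c := by
  rcases le_or_gt d (k * (c - p)) with hd | hd
  · exact Or.inl (min_eq_left hd)
  · rw [min_eq_right hd.le] at hpos ⊢
    have hct : c ∈ t := by
      rw [hg.1]
      exact ⟨hpos, hd⟩
    exact Or.inr (hg.2 hct).symm

end AffineBranch

section Digits

variable {β a₁ a₂ : ℝ}

lemma isAffineBranch_digitInt_zero (hβ : 0 < β) :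
    IsAffineBranch (greedyT β a₁ a₂) (digitInt β a₁ a₂ 0) β 0 a₁ := by
  have hT : ∀ x ∈ Ico 0 (a₁ / β), greedyT β a₁ a₂ x = β * (x - 0) := fun x hx => by
    rw [greedyT, if_pos hx.2, sub_zero]
  have hd : β * (a₁ / β - 0) = a₁ := by rw [sub_zero, mul_div_cancel₀ _ hβ.ne']
  rw [digitInt, if_pos rfl]
  simpa only [hd] using isAffineBranch_Ico hβ hT

lemma isAffineBranch_digitInt_fst (hβ : 0 < β) (ha₁ : a₁ ≠ 0) :
    IsAffineBranch (greedyT β a₁ a₂) (digitInt β a₁ a₂ a₁) β (a₁ / β) (a₂ - a₁) := by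
  have hT : ∀ x ∈ Ico (a₁ / β) (a₂ / β), greedyT β a₁ a₂ x = β * (x - a₁ / β) := fun x hx => by
    rw [greedyT, if_neg hx.1.not_gt, if_pos hx.2, mul_sub, mul_div_cancel₀ _ hβ.ne']
  have hd : β * (a₂ / β - a₁ / β) = a₂ - a₁ := by
    rw [mul_sub, mul_div_cancel₀ _ hβ.ne', mul_div_cancel₀ _ hβ.ne']
  rw [digitInt, if_neg ha₁, if_pos rfl]
  simpa only [hd] using isAffineBranch_Ico hβ hT

lemma isAffineBranch_digitInt_snd (hβ : 0 < β) (ha₂ : a₂ ≠ 0) (h12 : a₁ < a₂) :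
    IsAffineBranch (greedyT β a₁ a₂) (digitInt β a₁ a₂ a₂) β (a₂ / β) (β * a₁ - a₂) := by
  have hT : ∀ x ∈ Ico (a₂ / β) a₁, greedyT β a₁ a₂ x = β * (x - a₂ / β) := fun x hx => by
    have hx₁ : a₁ / β ≤ x := (div_le_div_of_nonneg_right h12.le hβ.le).trans hx.1
    rw [greedyT, if_neg hx₁.not_gt, if_neg hx.1.not_gt, mul_sub, mul_div_cancel₀ _ hβ.ne']
  have hd : β * (a₁ - a₂ / β) = β * a₁ - a₂ := by rw [mul_sub, mul_div_cancel₀ _ hβ.ne']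
  rw [digitInt, if_neg ha₂, if_neg h12.ne']
  simpa only [hd] using isAffineBranch_Ico hβ hT

lemma exists_isAffineBranch_digitInt (hβ : 0 < β) (ha₁ : 0 < a₁) (h12 : a₁ < a₂) {b : ℝ}
    (hb : b = 0 ∨ b = a₁ ∨ b = a₂) :
    ∃ p d, 0 ≤ p ∧ IsAffineBranch (greedyT β a₁ a₂) (digitInt β a₁ a₂ b) β p d ∧
      (d = a₁ ∨ d = a₂ - a₁ ∨ d = β * a₁ - a₂) := by
  have ha₂ : 0 < a₂ := ha₁.trans h12
  rcases hb with rfl | rfl | rfl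
  · exact ⟨0, a₁, le_rfl, isAffineBranch_digitInt_zero hβ, by simp⟩
  · exact ⟨_, _, by positivity, isAffineBranch_digitInt_fst hβ ha₁.ne', by simp⟩
  · exact ⟨_, _, by positivity, isAffineBranch_digitInt_snd hβ ha₂.ne' h12, by simp⟩

end Digits

section Cylinders

variable {β a₁ a₂ : ℝ} {w : List ℝ} {b c : ℝ}

lemma cyl_singleton : cyl β a₁ a₂ [b] = digitInt β a₁ a₂ b := by
  simp [cyl]

lemma cyl_append_singleton :
    cyl β a₁ a₂ (w ++ [b]) =
      cyl β a₁ a₂ w ∩ (greedyT β a₁ a₂)^[w.length] ⁻¹' digitInt β a₁ a₂ b := by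
  have hprefix (k : ℕ) (hk : k ∈ Finset.range w.length) : (w ++ [b]).getD k 0 = w.getD k 0 :=
    List.getD_append _ _ _ _ (Finset.mem_range.1 hk)
  have hlast : (w ++ [b]).getD w.length 0 = b := by simp
  simp only [cyl, List.length_append, List.length_singleton, Finset.range_add_one,
    Finset.set_biInter_insert, hlast]
  rw [inter_comm]
  congr 1
  exact iInter₂_congr fun k hk => by rw [hprefix k hk]

/-- The map `T^|w|` sends the fundamental interval `Δ(w)` affinely, with slope `β^|w|`, onto
`[0, c)`. -/
def IsCylBranch (β a₁ a₂ : ℝ) (w : List ℝ) (c : ℝ) : Prop :=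
  ∃ l, IsAffineBranch (greedyT β a₁ a₂)^[w.length] (cyl β a₁ a₂ w) (β ^ w.length) l c

lemma isCylBranch_singleton {p d : ℝ}
    (hb : IsAffineBranch (greedyT β a₁ a₂) (digitInt β a₁ a₂ b) β p d) :
    IsCylBranch β a₁ a₂ [b] d := by
  refine ⟨p, ?_⟩
  simpa only [cyl_singleton, List.length_singleton, Function.iterate_one, pow_one] using hb

lemma IsCylBranch.append_singleton {p d : ℝ} (h : IsCylBranch β a₁ a₂ w c) (hβ : 0 < β)
    (hp : 0 ≤ p) (hb : IsAffineBranch (greedyT β a₁ a₂) (digitInt β a₁ a₂ b) β p d) :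
    IsCylBranch β a₁ a₂ (w ++ [b]) (min d (β * (c - p))) := by
  obtain ⟨l, hl⟩ := h
  refine ⟨l + p / β ^ w.length, ?_⟩
  rw [cyl_append_singleton, List.length_append, List.length_singleton,
    Function.iterate_succ', pow_succ']
  exact hb.comp hl hβ (pow_pos hβ _).ne' hp

lemma IsCylBranch.image_eq (h : IsCylBranch β a₁ a₂ w c) (hβ : β ≠ 0) :
    (greedyT β a₁ a₂)^[w.length] '' cyl β a₁ a₂ w = Ico 0 c :=
  h.choose_spec.image_eq (pow_ne_zero _ hβ)

lemma IsCylBranch.volume_eq (h : IsCylBranch β a₁ a₂ w c) (hβ : 0 < β) :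
    volume (cyl β a₁ a₂ w) = ENNReal.ofReal (c / β ^ w.length) :=
  h.choose_spec.volume_eq (pow_pos hβ _)

lemma IsCylBranch.pos (h : IsCylBranch β a₁ a₂ w c) (hβ : 0 < β)
    (hvol : 0 < volume (cyl β a₁ a₂ w)) : 0 < c := by
  rw [h.volume_eq hβ, ENNReal.ofReal_pos] at hvol
  exact (div_pos_iff_of_pos_right (pow_pos hβ _)).1 hvol

lemma isFull_singleton_zero (hβ : 0 < β) : isFull β a₁ a₂ [0] :=
  (isCylBranch_singleton (isAffineBranch_digitInt_zero hβ)).volume_eq hβ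

end Cylinders

section CriticalOrbit

variable {β a₁ a₂ : ℝ} {n : ℕ} {w : List ℝ} {c : ℝ}

/-- The first `n` points of the orbits of the two critical values `a₂ - a₁` and `β a₁ - a₂`,
which are the right endpoints of `T Δ(a₁)` and `T Δ(a₂)`. -/
def criticalOrbit (β a₁ a₂ : ℝ) (n : ℕ) : Set ℝ :=
  {c | ∃ i < n, c = (greedyT β a₁ a₂)^[i] (a₂ - a₁) ∨ c = (greedyT β a₁ a₂)^[i] (β * a₁ - a₂)}

lemma mem_criticalOrbit_succ (hc : c = a₂ - a₁ ∨ c = β * a₁ - a₂) :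
    c ∈ criticalOrbit β a₁ a₂ (n + 1) :=
  ⟨0, n.succ_pos, hc⟩

lemma greedyT_mem_criticalOrbit_succ (hc : c ∈ criticalOrbit β a₁ a₂ n) :
    greedyT β a₁ a₂ c ∈ criticalOrbit β a₁ a₂ (n + 1) := by
  obtain ⟨i, hi, hci⟩ := hc
  refine ⟨i + 1, Nat.succ_lt_succ hi, ?_⟩
  rw [Function.iterate_succ_apply', Function.iterate_succ_apply']
  exact hci.imp (congrArg _) (congrArg _)

lemma exists_isCylBranch_mem_criticalOrbit (hβ : 0 < β) (ha₁ : 0 < a₁) (h12 : a₁ < a₂)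
    (hw : w ≠ []) (hword : isWord a₁ a₂ w) (hvol : 0 < volume (cyl β a₁ a₂ w))
    (hfull : ∀ w', w' ≠ [] → w' <+: w → ¬ isFull β a₁ a₂ w') :
    ∃ c ∈ criticalOrbit β a₁ a₂ w.length, IsCylBranch β a₁ a₂ w c := by
  induction w using List.reverseRecOn with
  | nil => exact absurd rfl hw
  | append_singleton w b ih =>
    obtain ⟨p, d, hp, hb, hd⟩ := exists_isAffineBranch_digitInt hβ ha₁ h12 (hword b (by simp))
    have hne {c : ℝ} (hc : IsCylBranch β a₁ a₂ (w ++ [b]) c) : c ≠ a₁ := by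
      rintro rfl
      exact hfull _ hw List.prefix_rfl (hc.volume_eq hβ)
    rw [List.length_append, List.length_singleton]
    rcases eq_or_ne w [] with rfl | hw₀
    · have hbranch := isCylBranch_singleton hb
      exact ⟨d, mem_criticalOrbit_succ (hd.resolve_left (hne hbranch)), hbranch⟩
    · have hvol₀ : 0 < volume (cyl β a₁ a₂ w) :=
        hvol.trans_le (measure_mono (cyl_append_singleton.trans_subset inter_subset_left))
      obtain ⟨c, hc, hcw⟩ := ih hw₀ (fun x hx => hword x (List.mem_append_left _ hx)) hvol₀
        fun w' hw' hpre => hfull w' hw' (hpre.trans (List.prefix_append _ _))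
      have hbranch := hcw.append_singleton hβ hp hb
      refine ⟨_, ?_, hbranch⟩
      rcases hb.min_eq_or_eq_apply (hbranch.pos hβ hvol).le with hmin | hmin
      · have hda : d ≠ a₁ := hmin ▸ hne hbranch
        rw [hmin]
        exact mem_criticalOrbit_succ (hd.resolve_left hda)
      · rw [hmin]
        exact greedyT_mem_criticalOrbit_succ hc

end CriticalOrbit

lemma memB.not_isFull_of_prefix {β a₁ a₂ : ℝ} {n : ℕ} {w w' : List ℝ} (hw : memB β a₁ a₂ n w)
    (hne : w' ≠ []) (hpre : w' <+: w) : ¬ isFull β a₁ a₂ w' := by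
  obtain ⟨-, -, -, hfull, hprefix⟩ := hw
  rcases eq_or_ne w' w with rfl | hw'
  · exact hfull
  · exact hprefix w' hne hpre hw'

lemma memB.headI_eq {β a₁ a₂ : ℝ} {n : ℕ} {w : List ℝ} (hw : memB β a₁ a₂ n w) (hβ : 0 < β)
    (hne : w ≠ []) : w.headI = a₁ ∨ w.headI = a₂ := by
  obtain ⟨b, v, rfl⟩ := List.exists_cons_of_ne_nil hne
  refine (hw.2.1 b List.mem_cons_self).resolve_left ?_
  rintro rfl
  exact hw.not_isFull_of_prefix (List.cons_ne_nil _ _) ⟨v, rfl⟩ (isFull_singleton_zero hβ)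

theorem stmt5_general {β a₁ a₂ : ℝ} (hβ : 0 < β) (ha₁ : 0 < a₁) (h12 : a₁ < a₂)
    {n : ℕ} (hn : 1 ≤ n) {w : List ℝ} (hw : memB β a₁ a₂ n w) :
    (w.headI = a₁ ∨ w.headI = a₂) ∧
    ∃ i < n,
      (greedyT β a₁ a₂)^[n] '' cyl β a₁ a₂ w =
        Set.Ico 0 ((greedyT β a₁ a₂)^[i] (a₂ - a₁)) ∨
      (greedyT β a₁ a₂)^[n] '' cyl β a₁ a₂ w =
        Set.Ico 0 ((greedyT β a₁ a₂)^[i] (β * a₁ - a₂)) := by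
  have hprefix : ∀ w', w' ≠ [] → w' <+: w → ¬ isFull β a₁ a₂ w' :=
    fun _ => hw.not_isFull_of_prefix
  have hne : w ≠ [] := List.length_pos_iff.1 (hw.1.symm ▸ hn)
  have hhead := hw.headI_eq hβ hne
  obtain ⟨rfl, hword, hvol, -⟩ := hw
  obtain ⟨c, ⟨i, hi, hc⟩, hbranch⟩ :=
    exists_isCylBranch_mem_criticalOrbit hβ ha₁ h12 hne hword hvol hprefix
  rw [hbranch.image_eq hβ.ne']
  exact ⟨hhead, i, hi, hc.imp (congrArg _) (congrArg _)⟩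

/-- For every `n ≥ 1` and every word `w = (b₀, …, b_{n−1}) ∈ Bₙ`,
the first digit `b₀` lies in `{a₁, a₂}`, and there is `0 ≤ i < n` such that
`Tⁿ(Δ(w))` equals `[0, Tⁱ(a₂ − a₁))` or `[0, Tⁱ(βa₁ − a₂))`. -/
theorem stmt5 (β a₁ a₂ : ℝ) (hβ1 : 1 < β) (hβ3 : β < 3)
    (ha₁ : 0 < a₁) (h12 : a₁ < a₂) (hc : condition6 β a₁ a₂)
    (n : ℕ) (hn : 1 ≤ n) (w : List ℝ) (hw : memB β a₁ a₂ n w) :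
    (w.headI = a₁ ∨ w.headI = a₂) ∧
    ∃ i < n,
      (greedyT β a₁ a₂)^[n] '' cyl β a₁ a₂ w =
        Set.Ico 0 ((greedyT β a₁ a₂)^[i] (a₂ - a₁)) ∨
      (greedyT β a₁ a₂)^[n] '' cyl β a₁ a₂ w =
        Set.Ico 0 ((greedyT β a₁ a₂)^[i] (β * a₁ - a₂)) :=
  stmt5_general (zero_lt_one.trans hβ1) ha₁ h12 hn hw
end

section
/- The measure μ is a finite measure on [0, a₁) equivalent to Lebesgue measure on [0, a₁), and μ is invariant under the greedy β-transformation T: for every Borel set E ⊆ [0, a₁), μ(T⁻¹E) = μ(E). -/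
open MeasureTheory Set

/-- The density `φ = 1 + Σ_{n≥1} Σ_{w ∈ Bₙ} β^(−n)·1_{TⁿΔ(w)}`. -/
noncomputable def phi (β a₁ a₂ : ℝ) (x : ℝ) : ℝ :=
  1 + ∑' n : ℕ, ∑' w : {w : List ℝ // memB β a₁ a₂ (n + 1) w},
    Set.indicator ((greedyT β a₁ a₂)^[n + 1] '' cyl β a₁ a₂ w.1)
      (fun _ => (β ^ (n + 1))⁻¹) x

/-- The measure `μ` on `[0, a₁)` with density `φ` with respect to Lebesgue
measure: `μ(E) = ∫_E φ dλ` for Borel `E ⊆ [0, a₁)`. -/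
noncomputable def muMeas (β a₁ a₂ : ℝ) : Measure ℝ :=
  (volume.restrict (Set.Ico 0 a₁)).withDensity
    fun x => ENNReal.ofReal (phi β a₁ a₂ x)

/-!
Let `r(w)` denote the length of `Tⁿ Δ(w)` for a word `w` of length `n`. Every image `Tⁿ Δ(w)` is
`[0, r(w))`, so `μ = ∑ μₙ` with `μₙ = ∑_{w ∈ Bₙ} β⁻ⁿ λ|[0, r(w))` and `μ₀ = λ|[0, a₁)`. Since `T`
maps each branch of `[0, r(w))` affinely onto `[0, r(wb))`, pushing `μₙ` forward by `T` produces the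
terms of `μₙ₊₁` from the non-full `wb` and a multiple of `μ₀` from the full ones:
`T_* μₙ = μₙ₊₁ + sₙ μ₀`. Hence `T_* μ = μ - μ₀ + (∑ sₙ) μ₀`, and `∑ sₙ = 1` because `T_* μ` and `μ`
have the same finite mass.

Finiteness comes from the growth of `Bₙ`: the potential `∑_{w ∈ Bₙ} (r(w) + a₁)` grows at most by
the factor `(β + 1) / 2 < β` at each step, so the terms of `φ` decay geometrically.
-/

theorem withDensity_finsetSum {α ι : Type*} [MeasurableSpace α] (μ : Measure α) (s : Finset ι)
    {f : ι → α → ENNReal} (hf : ∀ i ∈ s, Measurable (f i)) :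
    μ.withDensity (∑ i ∈ s, f i) = ∑ i ∈ s, μ.withDensity (f i) := by
  ext E hE
  simp only [withDensity_apply _ hE, Measure.finsetSum_apply, Finset.sum_apply]
  exact lintegral_finsetSum s hf

theorem restrict_eq_sum_restrict_inter {α ι : Type*} [MeasurableSpace α] (μ : Measure α)
    {s : Finset ι} {t : ι → Set α} {u : Set α} (hd : (s : Set ι).PairwiseDisjoint t)
    (ht : ∀ i, MeasurableSet (t i)) (hu : MeasurableSet u) (hsub : u ⊆ ⋃ i ∈ s, t i) :
    μ.restrict u = ∑ i ∈ s, μ.restrict (u ∩ t i) := by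
  have cover : ⋃ i ∈ s, u ∩ t i = u := by rw [← inter_iUnion₂, inter_eq_left.2 hsub]
  calc μ.restrict u
    _ = μ.restrict (⋃ i ∈ s, u ∩ t i) := by rw [cover]
    _ = Measure.sum fun i : s => μ.restrict (u ∩ t i) :=
      Measure.restrict_biUnion_finset (hd.mono fun _ => inter_subset_right) fun i => hu.inter (ht i)
    _ = ∑ i ∈ s, μ.restrict (u ∩ t i) := Measure.sum_coe_finset s fun i => μ.restrict (u ∩ t i)

theorem measurePreserving_sum_of_map_eq {α : Type*} [MeasurableSpace α] {T : α → α}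
    {m : ℕ → Measure α} {s : ℕ → ENNReal} [IsFiniteMeasure (Measure.sum m)] (hT : Measurable T)
    (hmap : ∀ n, (m n).map T = m (n + 1) + s n • m 0) :
    MeasurePreserving T (Measure.sum m) (Measure.sum m) := by
  set R := Measure.sum fun n => m (n + 1)
  have sum_eq : Measure.sum m = R + m 0 := by
    ext E hE
    rw [Measure.add_apply, Measure.sum_apply _ hE, Measure.sum_apply _ hE,
      tsum_eq_zero_add' ENNReal.summable, add_comm]
  have map_eq : (Measure.sum m).map T = R + (∑' n, s n) • m 0 := by
    rw [Measure.map_sum hT.aemeasurable, Measure.sum_congr hmap, ← Measure.sum_add_sum]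
    congr 1
    ext E hE
    simp [Measure.sum_apply _ hE, ENNReal.tsum_mul_right]
  have hR : R univ ≠ ⊤ :=
    ne_top_of_le_ne_top (measure_ne_top (Measure.sum m) univ) (by simp [sum_eq])
  have h0 : m 0 univ ≠ ⊤ :=
    ne_top_of_le_ne_top (measure_ne_top (Measure.sum m) univ) (by simp [sum_eq])
  have mass_eq : (∑' n, s n) * m 0 univ = m 0 univ := by
    have h := congr_arg (fun ν => ν univ) map_eq
    simp only [Measure.map_apply hT .univ, preimage_univ, sum_eq, Measure.add_apply,
      Measure.smul_apply, smul_eq_mul] at h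
    exact ((ENNReal.add_right_inj hR).1 h).symm
  refine ⟨hT, ?_⟩
  rw [map_eq, sum_eq]
  congr 1
  rcases eq_or_ne (m 0 univ) 0 with hz | hz
  · rw [Measure.measure_univ_eq_zero.1 hz, smul_zero]
  · rw [(ENNReal.mul_eq_right hz h0).1 mass_eq, one_smul]

theorem map_volume_mul_sub {β : ℝ} (hβ : 0 < β) (b : ℝ) :
    (volume : Measure ℝ).map (fun x => β * x - b) = ENNReal.ofReal β⁻¹ • volume := by
  have hcomp : (fun x : ℝ => β * x - b) = (fun x => x - b) ∘ (β * ·) := rfl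
  rw [hcomp, ← Measure.map_map (by fun_prop) (by fun_prop), Real.map_volume_mul_left hβ.ne',
    Measure.map_smul, map_sub_right_eq_self, abs_of_pos (inv_pos.2 hβ)]

/-- The alphabet `A = {0, a₁, a₂}` of digits. -/
noncomputable def greedyDigits (a₁ a₂ : ℝ) : Finset ℝ := {0, a₁, a₂}

/-- The standing assumptions on the parameters of the greedy transformation. -/
structure IsGreedyParam (β a₁ a₂ : ℝ) : Prop where
  one_lt : 1 < β
  pos : 0 < a₁
  cond : condition6 β a₁ a₂

/-- The right endpoint of `Δ(b)`. -/
noncomputable def digitSup (β a₁ a₂ b : ℝ) : ℝ :=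
  if b = 0 then a₁ / β else if b = a₁ then a₂ / β else a₁

/-- The length of the interval `T ([0, c) ∩ Δ(b)) = [0, branchLength β a₁ a₂ c b)`; it is negative
or zero when that interval is empty. -/
noncomputable def branchLength (β a₁ a₂ c b : ℝ) : ℝ := β * min c (digitSup β a₁ a₂ b) - b

/-- The length `r(w)` of the interval `Tⁿ Δ(w) = [0, r(w))`, for a word `w` of length `n`; it is
negative or zero when that interval is empty. -/
noncomputable def imageLength (β a₁ a₂ : ℝ) (w : List ℝ) : ℝ := w.foldl (branchLength β a₁ a₂) a₁

/-- The value `b₀ βⁿ⁻¹ + ⋯ + bₙ₋₁` of a word in base `β`, so that `Tⁿ x = βⁿ x - wordValue β w` on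
`Δ(w)`. -/
def wordValue (β : ℝ) (w : List ℝ) : ℝ := w.foldl (fun s b => β * s + b) 0

/-- The digits whose branch maps `[0, c)` to an interval that is neither empty nor all of
`[0, a₁)`. -/
noncomputable def nonfullDigits (β a₁ a₂ c : ℝ) : Finset ℝ :=
  (greedyDigits a₁ a₂).filter fun b =>
    0 < branchLength β a₁ a₂ c b ∧ branchLength β a₁ a₂ c b ≠ a₁

/-- The set `Bₙ` as a `Finset`, generated by appending digits; the value at `n = 0` is `{[]}`, which
accounts for the summand `1` of `φ`. -/
noncomputable def nonfullWords (β a₁ a₂ : ℝ) : ℕ → Finset (List ℝ)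
  | 0 => {[]}
  | n + 1 => ((nonfullWords β a₁ a₂ n).sigma fun w =>
      nonfullDigits β a₁ a₂ (imageLength β a₁ a₂ w)).image fun p => p.1 ++ [p.2]

/-- The `n`-th summand of the density `φ`. -/
noncomputable def levelDensity (β a₁ a₂ : ℝ) (n : ℕ) (x : ℝ) : ℝ :=
  ∑ w ∈ nonfullWords β a₁ a₂ n,
    (Ico 0 (imageLength β a₁ a₂ w)).indicator (fun _ => (β ^ n)⁻¹) x

/-- The measure with density `levelDensity β a₁ a₂ n`. -/
noncomputable def levelMeasure (β a₁ a₂ : ℝ) (n : ℕ) : Measure ℝ :=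
  ENNReal.ofReal (β ^ n)⁻¹ • ∑ w ∈ nonfullWords β a₁ a₂ n,
    volume.restrict (Ico 0 (imageLength β a₁ a₂ w))

section GreedyTransformation

variable {β a₁ a₂ b c x : ℝ} {w : List ℝ} {n : ℕ}

theorem mem_greedyDigits : b ∈ greedyDigits a₁ a₂ ↔ b = 0 ∨ b = a₁ ∨ b = a₂ := by
  simp only [greedyDigits, Finset.mem_insert, Finset.mem_singleton]

theorem isWord_iff_forall_mem_greedyDigits : isWord a₁ a₂ w ↔ ∀ b ∈ w, b ∈ greedyDigits a₁ a₂ := by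
  simp only [isWord, mem_greedyDigits]

theorem isWord_append_singleton :
    isWord a₁ a₂ (w ++ [b]) ↔ isWord a₁ a₂ w ∧ b ∈ greedyDigits a₁ a₂ := by
  simp only [isWord_iff_forall_mem_greedyDigits, List.forall_mem_append, List.forall_mem_singleton]

theorem imageLength_append_singleton :
    imageLength β a₁ a₂ (w ++ [b]) = branchLength β a₁ a₂ (imageLength β a₁ a₂ w) b := by
  simp only [imageLength, List.foldl_append, List.foldl_cons, List.foldl_nil]

theorem wordValue_append_singleton : wordValue β (w ++ [b]) = β * wordValue β w + b := by
  simp only [wordValue, List.foldl_append, List.foldl_cons, List.foldl_nil]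

theorem digitSup_zero : digitSup β a₁ a₂ 0 = a₁ / β := if_pos rfl

theorem sum_nonfullWords_succ {M : Type*} [AddCommMonoid M] (g : ℝ → M) (n : ℕ) :
    ∑ w ∈ nonfullWords β a₁ a₂ (n + 1), g (imageLength β a₁ a₂ w) =
      ∑ w ∈ nonfullWords β a₁ a₂ n, ∑ b ∈ nonfullDigits β a₁ a₂ (imageLength β a₁ a₂ w),
        g (branchLength β a₁ a₂ (imageLength β a₁ a₂ w) b) := by
  rw [nonfullWords, Finset.sum_image, Finset.sum_sigma]
  · simp only [imageLength_append_singleton]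
  · rintro ⟨v, b⟩ - ⟨v', b'⟩ - heq
    obtain ⟨rfl, hb⟩ := List.append_inj' heq rfl
    exact congr_arg _ (List.singleton_inj.1 hb)

theorem measurable_levelDensity (n : ℕ) : Measurable (levelDensity β a₁ a₂ n) :=
  Finset.measurable_sum _ fun _ _ => measurable_const.indicator measurableSet_Ico

theorem levelMeasure_zero : levelMeasure β a₁ a₂ 0 = volume.restrict (Ico 0 a₁) := by
  simp [levelMeasure, nonfullWords, imageLength]

theorem measurable_greedyT : Measurable (greedyT β a₁ a₂) := by
  unfold greedyT
  exact .ite measurableSet_Iio (by fun_prop) (.ite measurableSet_Iio (by fun_prop) (by fun_prop))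

theorem mem_cyl : x ∈ cyl β a₁ a₂ w ↔
    ∀ k < w.length, (greedyT β a₁ a₂)^[k] x ∈ digitInt β a₁ a₂ (w.getD k 0) := by
  simp only [cyl, mem_iInter, Finset.mem_range, mem_preimage]

theorem mem_cyl_append_singleton : x ∈ cyl β a₁ a₂ (w ++ [b]) ↔
    x ∈ cyl β a₁ a₂ w ∧ (greedyT β a₁ a₂)^[w.length] x ∈ digitInt β a₁ a₂ b := by
  have getD_init {k : ℕ} (hk : k < w.length) : (w ++ [b]).getD k 0 = w.getD k 0 :=
    List.getD_append _ _ _ _ hk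
  have getD_last : (w ++ [b]).getD w.length 0 = b := by simp
  simp only [mem_cyl, List.length_append, List.length_singleton, Nat.forall_lt_succ_right,
    getD_last]
  exact and_congr_left' (forall₂_congr fun k hk => by rw [getD_init hk])

theorem measurableSet_digitInt (b : ℝ) : MeasurableSet (digitInt β a₁ a₂ b) := by
  unfold digitInt
  split_ifs <;> exact measurableSet_Ico

theorem exists_sum_restrict_branchLength_eq (c : ℝ) :
    ∃ k : ENNReal, ∑ b ∈ greedyDigits a₁ a₂, volume.restrict (Ico 0 (branchLength β a₁ a₂ c b)) =
      ∑ b ∈ nonfullDigits β a₁ a₂ c, volume.restrict (Ico 0 (branchLength β a₁ a₂ c b)) +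
        k • volume.restrict (Ico 0 a₁) := by
  refine ⟨((greedyDigits a₁ a₂).filter (branchLength β a₁ a₂ c · = a₁)).card, ?_⟩
  rw [← Finset.sum_filter_add_sum_filter_not _ (branchLength β a₁ a₂ c · = a₁), add_comm]
  congr 1
  · rw [nonfullDigits, Finset.sum_filter, Finset.sum_filter]
    refine Finset.sum_congr rfl fun b _ => ?_
    by_cases hpos : 0 < branchLength β a₁ a₂ c b
    · simp only [hpos, true_and, ne_eq]
    · simp only [hpos, false_and, Ico_eq_empty hpos, Measure.restrict_empty, ite_self]
  · rw [Nat.cast_smul_eq_nsmul, ← Finset.sum_const]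
    exact Finset.sum_congr rfl fun b hb => by rw [(Finset.mem_filter.1 hb).2]

namespace IsGreedyParam

variable (h : IsGreedyParam β a₁ a₂)
include h
theorem beta_pos : 0 < β := one_pos.trans h.one_lt

theorem lt_digit : a₁ < a₂ :=
  calc a₁ = a₁ * 1 := (mul_one a₁).symm
    _ ≤ a₁ * max (β - 1) 1 := mul_le_mul_of_nonneg_left (le_max_right _ _) h.pos.le
    _ < a₂ := h.cond.1

theorem sub_one_mul_lt : (β - 1) * a₁ < a₂ :=
  calc (β - 1) * a₁ = a₁ * (β - 1) := mul_comm _ _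
    _ ≤ a₁ * max (β - 1) 1 := mul_le_mul_of_nonneg_left (le_max_left _ _) h.pos.le
    _ < a₂ := h.cond.1

theorem lt_two_mul : a₂ < 2 * a₁ :=
  calc a₂ < a₁ * min 2 β := h.cond.2
    _ ≤ a₁ * 2 := mul_le_mul_of_nonneg_left (min_le_left _ _) h.pos.le
    _ = 2 * a₁ := mul_comm _ _

theorem lt_mul : a₂ < β * a₁ :=
  calc a₂ < a₁ * min 2 β := h.cond.2
    _ ≤ a₁ * β := mul_le_mul_of_nonneg_left (min_le_right _ _) h.pos.le
    _ = β * a₁ := mul_comm _ _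

theorem digit_nonneg (hb : b ∈ greedyDigits a₁ a₂) : 0 ≤ b := by
  rcases mem_greedyDigits.1 hb with rfl | rfl | rfl
  exacts [le_rfl, h.pos.le, (h.pos.trans h.lt_digit).le]

theorem digitSup_left : digitSup β a₁ a₂ a₁ = a₂ / β := by
  rw [digitSup, if_neg h.pos.ne', if_pos rfl]

theorem digitSup_right : digitSup β a₁ a₂ a₂ = a₁ := by
  rw [digitSup, if_neg (h.pos.trans h.lt_digit).ne', if_neg h.lt_digit.ne']

theorem digitInt_eq_Ico (hb : b ∈ greedyDigits a₁ a₂) :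
    digitInt β a₁ a₂ b = Ico (b / β) (digitSup β a₁ a₂ b) := by
  rcases mem_greedyDigits.1 hb with rfl | rfl | rfl
  · rw [digitSup_zero, zero_div, digitInt, if_pos rfl]
  · rw [h.digitSup_left, digitInt, if_neg h.pos.ne', if_pos rfl]
  · rw [h.digitSup_right, digitInt, if_neg (h.pos.trans h.lt_digit).ne', if_neg h.lt_digit.ne']

theorem digitSup_le (hb : b ∈ greedyDigits a₁ a₂) : digitSup β a₁ a₂ b ≤ a₁ := by
  rcases mem_greedyDigits.1 hb with rfl | rfl | rfl
  · exact digitSup_zero.trans_le (div_le_self h.pos.le h.one_lt.le)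
  · exact h.digitSup_left.trans_le ((div_le_iff₀' h.beta_pos).2 h.lt_mul.le)
  · exact h.digitSup_right.le

theorem mul_digitSup_le (hb : b ∈ greedyDigits a₁ a₂) : β * digitSup β a₁ a₂ b ≤ b + a₁ := by
  have hβ := h.beta_pos.ne'
  rcases mem_greedyDigits.1 hb with rfl | rfl | rfl
  · rw [digitSup_zero, mul_div_cancel₀ _ hβ, zero_add]
  · rw [h.digitSup_left, mul_div_cancel₀ _ hβ]
    linarith [h.lt_two_mul]
  · rw [h.digitSup_right]
    linarith [h.sub_one_mul_lt]

theorem branchLength_le (hb : b ∈ greedyDigits a₁ a₂) (c : ℝ) : branchLength β a₁ a₂ c b ≤ a₁ := by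
  have hmin : β * min c (digitSup β a₁ a₂ b) ≤ β * digitSup β a₁ a₂ b :=
    mul_le_mul_of_nonneg_left (min_le_right _ _) h.beta_pos.le
  rw [branchLength]
  linarith [h.mul_digitSup_le hb]

theorem pos_of_branchLength_pos (hb : b ∈ greedyDigits a₁ a₂)
    (hpos : 0 < branchLength β a₁ a₂ c b) : 0 < c := by
  have hmin : 0 < β * min c (digitSup β a₁ a₂ b) := (h.digit_nonneg hb).trans_lt (sub_pos.1 hpos)
  exact (pos_of_mul_pos_right hmin h.beta_pos.le).trans_le (min_le_left _ _)

theorem branchLength_zero : branchLength β a₁ a₂ c 0 = min (β * c) a₁ := by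
  rw [branchLength, digitSup_zero, mul_min_of_nonneg _ _ h.beta_pos.le,
    mul_div_cancel₀ _ h.beta_pos.ne', sub_zero]

theorem branchLength_left : branchLength β a₁ a₂ c a₁ = min (β * c) a₂ - a₁ := by
  rw [branchLength, h.digitSup_left, mul_min_of_nonneg _ _ h.beta_pos.le,
    mul_div_cancel₀ _ h.beta_pos.ne']

theorem branchLength_right (hc : c ≤ a₁) : branchLength β a₁ a₂ c a₂ = β * c - a₂ := by
  rw [branchLength, h.digitSup_right, min_eq_left hc]

theorem Ico_inter_digitInt (hb : b ∈ greedyDigits a₁ a₂) (c : ℝ) :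
    Ico 0 c ∩ digitInt β a₁ a₂ b = (fun x => β * x - b) ⁻¹' Ico 0 (branchLength β a₁ a₂ c b) := by
  ext x
  have nonneg_of_le (hx : b / β ≤ x) : 0 ≤ x :=
    (div_nonneg (h.digit_nonneg hb) h.beta_pos.le).trans hx
  simp only [h.digitInt_eq_Ico hb, branchLength, mem_inter_iff, mem_Ico, mem_preimage, sub_nonneg,
    sub_lt_sub_iff_right, mul_lt_mul_iff_right₀ h.beta_pos, lt_min_iff, ← div_le_iff₀' h.beta_pos]
  tauto

theorem greedyT_eq_of_mem_digitInt (hb : b ∈ greedyDigits a₁ a₂) (hx : x ∈ digitInt β a₁ a₂ b) :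
    greedyT β a₁ a₂ x = β * x - b := by
  have hlt : a₁ / β < a₂ / β := div_lt_div_of_pos_right h.lt_digit h.beta_pos
  rw [h.digitInt_eq_Ico hb] at hx
  rcases mem_greedyDigits.1 hb with rfl | rfl | rfl
  · rw [greedyT, if_pos (hx.2.trans_eq digitSup_zero), sub_zero]
  · rw [greedyT, if_neg hx.1.not_gt, if_pos (hx.2.trans_eq h.digitSup_left)]
  · rw [greedyT, if_neg (hlt.le.trans hx.1).not_gt, if_neg hx.1.not_gt]

theorem iterate_greedyT_of_mem_cyl (hw : isWord a₁ a₂ w) (hx : x ∈ cyl β a₁ a₂ w) :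
    (greedyT β a₁ a₂)^[w.length] x = β ^ w.length * x - wordValue β w := by
  induction w using List.reverseRecOn with
  | nil => simp [wordValue]
  | append_singleton w b ih =>
    obtain ⟨hw, hb⟩ := isWord_append_singleton.1 hw
    obtain ⟨hxw, hxb⟩ := mem_cyl_append_singleton.1 hx
    rw [List.length_append, List.length_singleton, Function.iterate_succ_apply',
      h.greedyT_eq_of_mem_digitInt hb hxb, ih hw hxw, wordValue_append_singleton]
    ring

theorem cyl_inter_Ico (hw : isWord a₁ a₂ w) :
    cyl β a₁ a₂ w ∩ Ico 0 a₁ =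
      (fun x => β ^ w.length * x - wordValue β w) ⁻¹' Ico 0 (imageLength β a₁ a₂ w) := by
  induction w using List.reverseRecOn with
  | nil => simp [cyl, wordValue, imageLength]
  | append_singleton w b ih =>
    obtain ⟨hw, hb⟩ := isWord_append_singleton.1 hw
    ext x
    set y := β ^ w.length * x - wordValue β w with hy
    calc x ∈ cyl β a₁ a₂ (w ++ [b]) ∩ Ico 0 a₁
      _ ↔ x ∈ cyl β a₁ a₂ w ∩ Ico 0 a₁ ∧
          (greedyT β a₁ a₂)^[w.length] x ∈ digitInt β a₁ a₂ b := by
        rw [mem_inter_iff, mem_cyl_append_singleton, and_right_comm, mem_inter_iff]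
      _ ↔ x ∈ cyl β a₁ a₂ w ∩ Ico 0 a₁ ∧ y ∈ digitInt β a₁ a₂ b :=
        and_congr_right fun hx => by rw [h.iterate_greedyT_of_mem_cyl hw hx.1]
      _ ↔ y ∈ Ico 0 (imageLength β a₁ a₂ w) ∩ digitInt β a₁ a₂ b := by
        rw [ih hw, mem_preimage, mem_inter_iff]
      _ ↔ β * y - b ∈ Ico 0 (imageLength β a₁ a₂ (w ++ [b])) := by
        rw [h.Ico_inter_digitInt hb, mem_preimage, imageLength_append_singleton]
      _ ↔ _ := by
        rw [mem_preimage, wordValue_append_singleton, List.length_append, List.length_singleton,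
          hy]
        ring_nf

theorem cyl_subset_Ico (hw : isWord a₁ a₂ w) (hne : w ≠ []) : cyl β a₁ a₂ w ⊆ Ico 0 a₁ := by
  intro x hx
  obtain ⟨b, v, rfl⟩ := List.exists_cons_of_ne_nil hne
  have hb : b ∈ greedyDigits a₁ a₂ :=
    isWord_iff_forall_mem_greedyDigits.1 hw b List.mem_cons_self
  have hxb : x ∈ digitInt β a₁ a₂ b := by simpa using mem_cyl.1 hx 0 (by simp)
  rw [h.digitInt_eq_Ico hb] at hxb
  exact ⟨(div_nonneg (h.digit_nonneg hb) h.beta_pos.le).trans hxb.1,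
    hxb.2.trans_le (h.digitSup_le hb)⟩

theorem cyl_eq_preimage (hw : isWord a₁ a₂ w) (hne : w ≠ []) :
    cyl β a₁ a₂ w =
      (fun x => β ^ w.length * x - wordValue β w) ⁻¹' Ico 0 (imageLength β a₁ a₂ w) := by
  rw [← h.cyl_inter_Ico hw, inter_eq_left.2 (h.cyl_subset_Ico hw hne)]

theorem image_iterate_greedyT_cyl (hw : isWord a₁ a₂ w) (hne : w ≠ []) :
    (greedyT β a₁ a₂)^[w.length] '' cyl β a₁ a₂ w = Ico 0 (imageLength β a₁ a₂ w) := by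
  have hβ : β ^ w.length ≠ 0 := pow_ne_zero _ h.beta_pos.ne'
  rw [image_congr fun x hx => h.iterate_greedyT_of_mem_cyl hw hx, h.cyl_eq_preimage hw hne]
  exact image_preimage_eq _ fun y => ⟨(y + wordValue β w) / β ^ w.length, by field_simp; ring⟩

theorem volume_cyl (hw : isWord a₁ a₂ w) (hne : w ≠ []) :
    volume (cyl β a₁ a₂ w) = ENNReal.ofReal (imageLength β a₁ a₂ w / β ^ w.length) := by
  have hβ : 0 < β ^ w.length := pow_pos h.beta_pos _
  rw [h.cyl_eq_preimage hw hne, ← Measure.map_apply (by fun_prop) measurableSet_Ico,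
    map_volume_mul_sub hβ, Measure.smul_apply, Real.volume_Ico, sub_zero, smul_eq_mul,
    ← ENNReal.ofReal_mul (inv_nonneg.2 hβ.le), inv_mul_eq_div]

theorem isFull_iff_imageLength_eq (hw : isWord a₁ a₂ w) (hne : w ≠ []) :
    isFull β a₁ a₂ w ↔ imageLength β a₁ a₂ w = a₁ := by
  have hβ : 0 < β ^ w.length := pow_pos h.beta_pos _
  rw [isFull, h.volume_cyl hw hne]
  refine ⟨fun heq => ?_, fun heq => by rw [heq]⟩
  have hpos : 0 < imageLength β a₁ a₂ w / β ^ w.length :=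
    ENNReal.ofReal_pos.1 (heq ▸ ENNReal.ofReal_pos.2 (div_pos h.pos hβ))
  exact (div_left_inj' hβ.ne').1
    ((ENNReal.ofReal_eq_ofReal_iff hpos.le (div_pos h.pos hβ).le).1 heq)

theorem mem_nonfullWords : w ∈ nonfullWords β a₁ a₂ n ↔
    w.length = n ∧ isWord a₁ a₂ w ∧ 0 < imageLength β a₁ a₂ w ∧
      ∀ w' : List ℝ, w' ≠ [] → w' <+: w → imageLength β a₁ a₂ w' ≠ a₁ := by
  induction n generalizing w with
  | zero =>
    rw [nonfullWords, Finset.mem_singleton]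
    refine ⟨?_, fun hw => List.length_eq_zero_iff.1 hw.1⟩
    rintro rfl
    exact ⟨rfl, by simp [isWord], h.pos, fun w' hne hpre => absurd (List.prefix_nil.1 hpre) hne⟩
  | succ n ih =>
    simp only [nonfullWords, Finset.mem_image, Finset.mem_sigma, Sigma.exists, nonfullDigits,
      Finset.mem_filter]
    constructor
    · rintro ⟨v, b, ⟨hv, hb, hpos, hnf⟩, rfl⟩
      obtain ⟨hlen, hword, -, hpre⟩ := ih.1 hv
      rw [← imageLength_append_singleton] at hpos hnf
      refine ⟨by simp [hlen], isWord_append_singleton.2 ⟨hword, hb⟩, hpos, fun w' hne hw' => ?_⟩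
      rcases List.prefix_concat_iff.1 hw' with rfl | hw'
      exacts [hnf, hpre w' hne hw']
    · rintro ⟨hlen, hword, hpos, hpre⟩
      rcases List.eq_nil_or_concat' w with rfl | ⟨v, b, rfl⟩
      · simp at hlen
      obtain ⟨hv, hb⟩ := isWord_append_singleton.1 hword
      have hnf := hpre (v ++ [b]) (by simp) List.prefix_rfl
      rw [imageLength_append_singleton] at hpos hnf
      exact ⟨v, b, ⟨ih.2 ⟨by simpa using hlen, hv, h.pos_of_branchLength_pos hb hpos,
        fun w' hne hw' => hpre w' hne (hw'.trans (List.prefix_append _ _))⟩, hb, hpos, hnf⟩, rfl⟩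

theorem memB_succ_iff_mem_nonfullWords :
    memB β a₁ a₂ (n + 1) w ↔ w ∈ nonfullWords β a₁ a₂ (n + 1) := by
  rw [h.mem_nonfullWords, memB]
  refine and_congr_right fun hlen => and_congr_right fun hw => ?_
  have hne : w ≠ [] := List.ne_nil_of_length_eq_add_one hlen
  have full_iff {w' : List ℝ} (hne' : w' ≠ []) (hpre : w' <+: w) :
      isFull β a₁ a₂ w' ↔ imageLength β a₁ a₂ w' = a₁ :=
    h.isFull_iff_imageLength_eq (fun b hb => hw b (hpre.subset hb)) hne'
  rw [h.volume_cyl hw hne, ENNReal.ofReal_pos, div_pos_iff_of_pos_right (pow_pos h.beta_pos _)]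
  refine and_congr_right fun _ => ⟨fun ⟨hnf, hpre⟩ w' hne' hw' => ?_, fun hpre => ⟨?_, ?_⟩⟩
  · rw [ne_eq, ← full_iff hne' hw']
    rcases eq_or_ne w' w with rfl | hww'
    exacts [hnf, hpre w' hne' hw' hww']
  · exact (full_iff hne List.prefix_rfl).not.2 (hpre w hne List.prefix_rfl)
  · exact fun w' hne' hw' _ => (full_iff hne' hw').not.2 (hpre w' hne' hw')

theorem imageLength_le (hw : isWord a₁ a₂ w) : imageLength β a₁ a₂ w ≤ a₁ := by
  rcases List.eq_nil_or_concat' w with rfl | ⟨v, b, rfl⟩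
  · exact le_rfl
  · rw [imageLength_append_singleton]
    exact h.branchLength_le (isWord_append_singleton.1 hw).2 _

theorem imageLength_mem_Ioc (hw : w ∈ nonfullWords β a₁ a₂ n) :
    imageLength β a₁ a₂ w ∈ Ioc 0 a₁ := by
  obtain ⟨-, hword, hpos, -⟩ := h.mem_nonfullWords.1 hw
  exact ⟨hpos, h.imageLength_le hword⟩

theorem sum_greedyDigits {M : Type*} [AddCommMonoid M] (f : ℝ → M) :
    ∑ b ∈ greedyDigits a₁ a₂, f b = f 0 + (f a₁ + f a₂) := by
  have hne : (0 : ℝ) ∉ ({a₁, a₂} : Finset ℝ) := by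
    simp [h.pos.ne, (h.pos.trans h.lt_digit).ne]
  rw [greedyDigits, Finset.sum_insert hne, Finset.sum_pair h.lt_digit.ne]

/- The lengths of the branch images add up to `β c`, each full one being `a₁`, and there is at most
one more non-full branch than there are full ones. -/
theorem sum_nonfullDigits_le (hc : 0 < c) (hca : c ≤ a₁) :
    ∑ b ∈ nonfullDigits β a₁ a₂ c, (branchLength β a₁ a₂ c b + a₁) ≤ β * c + a₁ := by
  have hβc : 0 < β * c := mul_pos h.beta_pos hc
  have h12 := h.lt_digit
  rw [nonfullDigits, Finset.sum_filter, h.sum_greedyDigits, h.branchLength_zero,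
    h.branchLength_left, h.branchLength_right hca]
  rcases le_or_gt (β * c) a₁ with hle | hgt
  · rw [min_eq_left hle, min_eq_left (hle.trans h12.le), if_neg (c := 0 < β * c - a₁ ∧ _)
      (fun hp => by linarith [hp.1]), if_neg (c := 0 < β * c - a₂ ∧ _)
      (fun hp => by linarith [hp.1])]
    split_ifs <;> linarith
  rw [min_eq_right hgt.le, if_neg (fun hp => hp.2 rfl)]
  rcases le_or_gt (β * c) a₂ with hle₂ | hgt₂
  · rw [min_eq_left hle₂, if_neg (c := 0 < β * c - a₂ ∧ _) (fun hp => by linarith [hp.1])]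
    split_ifs <;> linarith
  · rw [min_eq_right hgt₂.le]
    split_ifs <;> linarith

theorem sum_nonfullWords_le (n : ℕ) :
    ∑ w ∈ nonfullWords β a₁ a₂ n, (imageLength β a₁ a₂ w + a₁) ≤ ((β + 1) / 2) ^ n * (2 * a₁) := by
  induction n with
  | zero => simp [nonfullWords, imageLength, two_mul]
  | succ n ih =>
    have hβ : 0 ≤ (β + 1) / 2 := by linarith [h.one_lt]
    have mul_add_le {c : ℝ} (hc : c ≤ a₁) : β * c + a₁ ≤ (β + 1) / 2 * (c + a₁) := by
      linarith [mul_nonneg (sub_nonneg.2 h.one_lt.le) (sub_nonneg.2 hc)]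
    rw [sum_nonfullWords_succ fun c => c + a₁]
    calc ∑ w ∈ nonfullWords β a₁ a₂ n, ∑ b ∈ nonfullDigits β a₁ a₂ (imageLength β a₁ a₂ w),
          (branchLength β a₁ a₂ (imageLength β a₁ a₂ w) b + a₁)
      _ ≤ ∑ w ∈ nonfullWords β a₁ a₂ n, (β + 1) / 2 * (imageLength β a₁ a₂ w + a₁) := by
        refine Finset.sum_le_sum fun w hw => ?_
        obtain ⟨hpos, hle⟩ := h.imageLength_mem_Ioc hw
        exact (h.sum_nonfullDigits_le hpos hle).trans (mul_add_le hle)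
      _ = (β + 1) / 2 * ∑ w ∈ nonfullWords β a₁ a₂ n, (imageLength β a₁ a₂ w + a₁) :=
        Finset.mul_sum _ _ _ |>.symm
      _ ≤ (β + 1) / 2 * (((β + 1) / 2) ^ n * (2 * a₁)) := mul_le_mul_of_nonneg_left ih hβ
      _ = ((β + 1) / 2) ^ (n + 1) * (2 * a₁) := by ring

theorem card_nonfullWords_le (n : ℕ) :
    ((nonfullWords β a₁ a₂ n).card : ℝ) ≤ 2 * ((β + 1) / 2) ^ n := by
  refine le_of_mul_le_mul_right ?_ h.pos
  calc ((nonfullWords β a₁ a₂ n).card : ℝ) * a₁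
    _ = ∑ _w ∈ nonfullWords β a₁ a₂ n, a₁ := by rw [Finset.sum_const, nsmul_eq_mul]
    _ ≤ ∑ w ∈ nonfullWords β a₁ a₂ n, (imageLength β a₁ a₂ w + a₁) :=
      Finset.sum_le_sum fun w hw => le_add_of_nonneg_left (h.imageLength_mem_Ioc hw).1.le
    _ ≤ ((β + 1) / 2) ^ n * (2 * a₁) := h.sum_nonfullWords_le n
    _ = 2 * ((β + 1) / 2) ^ n * a₁ := by ring

theorem levelDensity_nonneg (n : ℕ) (x : ℝ) : 0 ≤ levelDensity β a₁ a₂ n x :=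
  Finset.sum_nonneg fun _ _ =>
    indicator_nonneg (fun _ _ => inv_nonneg.2 (pow_nonneg h.beta_pos.le n)) x

theorem levelDensity_le (n : ℕ) (x : ℝ) :
    levelDensity β a₁ a₂ n x ≤ 2 * ((β + 1) / 2 / β) ^ n := by
  have hβ : 0 ≤ (β ^ n)⁻¹ := inv_nonneg.2 (pow_nonneg h.beta_pos.le n)
  calc levelDensity β a₁ a₂ n x
    _ ≤ ∑ _w ∈ nonfullWords β a₁ a₂ n, (β ^ n)⁻¹ :=
      Finset.sum_le_sum fun w _ => indicator_le_self' (fun _ _ => hβ) x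
    _ = (nonfullWords β a₁ a₂ n).card * (β ^ n)⁻¹ := by rw [Finset.sum_const, nsmul_eq_mul]
    _ ≤ 2 * ((β + 1) / 2) ^ n * (β ^ n)⁻¹ :=
      mul_le_mul_of_nonneg_right (h.card_nonfullWords_le n) hβ
    _ = 2 * ((β + 1) / 2 / β) ^ n := by rw [div_pow _ β, mul_assoc, div_eq_mul_inv _ (β ^ n)]

theorem summable_levelDensity_bound : Summable fun n : ℕ => 2 * ((β + 1) / 2 / β) ^ n := by
  have hβ := h.one_lt
  have ratio_lt_one : (β + 1) / 2 / β < 1 := (div_lt_one h.beta_pos).2 (by linarith)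
  exact (summable_geometric_of_lt_one (by positivity) ratio_lt_one).mul_left 2

theorem summable_levelDensity (x : ℝ) : Summable fun n => levelDensity β a₁ a₂ n x :=
  .of_nonneg_of_le (h.levelDensity_nonneg · x) (h.levelDensity_le · x)
    h.summable_levelDensity_bound

theorem phi_eq_tsum_levelDensity (hx : x ∈ Ico 0 a₁) :
    phi β a₁ a₂ x = ∑' n, levelDensity β a₁ a₂ n x := by
  rw [(h.summable_levelDensity x).tsum_eq_zero_add, phi]
  congr 1
  · simp [levelDensity, nonfullWords, imageLength, indicator_of_mem hx]
  refine tsum_congr fun n => ?_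
  rw [levelDensity, ← Finset.tsum_subtype (nonfullWords β a₁ a₂ (n + 1)) fun w =>
      (Ico 0 (imageLength β a₁ a₂ w)).indicator (fun _ => (β ^ (n + 1))⁻¹) x,
    ← (Equiv.subtypeEquivRight fun _ => h.memB_succ_iff_mem_nonfullWords).tsum_eq]
  refine tsum_congr fun ⟨w, hw⟩ => ?_
  have hne : w ≠ [] := List.ne_nil_of_length_eq_add_one hw.1
  have image_eq := h.image_iterate_greedyT_cyl hw.2.1 hne
  rw [hw.1] at image_eq
  rw [image_eq]
  rfl

theorem isFiniteMeasure_muMeas : IsFiniteMeasure (muMeas β a₁ a₂) := by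
  refine isFiniteMeasure_withDensity_ofReal (.of_bounded (C := ∑' n, 2 * ((β + 1) / 2 / β) ^ n) ?_)
  refine ae_restrict_of_forall_mem measurableSet_Ico fun x hx => ?_
  rw [h.phi_eq_tsum_levelDensity hx]
  refine tsum_of_norm_bounded h.summable_levelDensity_bound.hasSum fun n => ?_
  rw [Real.norm_of_nonneg (h.levelDensity_nonneg n x)]
  exact h.levelDensity_le n x

theorem withDensity_levelDensity (n : ℕ) :
    (volume.restrict (Ico 0 a₁)).withDensity (fun x => ENNReal.ofReal (levelDensity β a₁ a₂ n x)) =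
      levelMeasure β a₁ a₂ n := by
  have hβ : 0 ≤ (β ^ n)⁻¹ := inv_nonneg.2 (pow_nonneg h.beta_pos.le n)
  have ofReal_eq : (fun x => ENNReal.ofReal (levelDensity β a₁ a₂ n x)) =
      ∑ w ∈ nonfullWords β a₁ a₂ n, (Ico 0 (imageLength β a₁ a₂ w)).indicator
        fun _ => ENNReal.ofReal (β ^ n)⁻¹ := by
    ext x
    rw [levelDensity, ENNReal.ofReal_sum_of_nonneg fun _ _ => indicator_nonneg (fun _ _ => hβ) x,
      Finset.sum_apply]
    exact Finset.sum_congr rfl fun w _ =>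
      congr_fun (comp_indicator_const _ ENNReal.ofReal ENNReal.ofReal_zero) x
  rw [ofReal_eq, withDensity_finsetSum _ _ fun _ _ => measurable_const.indicator measurableSet_Ico,
    levelMeasure, Finset.smul_sum]
  refine Finset.sum_congr rfl fun w hw => ?_
  rw [withDensity_indicator measurableSet_Ico, withDensity_const,
    Measure.restrict_restrict_of_subset (Ico_subset_Ico_right (h.imageLength_mem_Ioc hw).2)]

theorem muMeas_eq_sum_levelMeasure : muMeas β a₁ a₂ = Measure.sum (levelMeasure β a₁ a₂) := by
  have density_eq : (fun x => ENNReal.ofReal (phi β a₁ a₂ x)) =ᵐ[volume.restrict (Ico 0 a₁)]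
      ∑' n, fun x => ENNReal.ofReal (levelDensity β a₁ a₂ n x) := by
    refine ae_restrict_of_forall_mem measurableSet_Ico fun x hx => ?_
    simp only [h.phi_eq_tsum_levelDensity hx, ENNReal.tsum_apply,
      ENNReal.ofReal_tsum_of_nonneg (h.levelDensity_nonneg · x) (h.summable_levelDensity x)]
  rw [muMeas, withDensity_congr_ae density_eq,
    withDensity_tsum fun n => (measurable_levelDensity n).ennreal_ofReal]
  exact Measure.sum_congr h.withDensity_levelDensity

theorem pairwiseDisjoint_digitInt :
    (greedyDigits a₁ a₂ : Set ℝ).PairwiseDisjoint (digitInt β a₁ a₂) := by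
  have disjoint_of_le {b c : ℝ} (hb : b ∈ greedyDigits a₁ a₂) (hc : c ∈ greedyDigits a₁ a₂)
      (hle : digitSup β a₁ a₂ b ≤ c / β) : Disjoint (digitInt β a₁ a₂ b) (digitInt β a₁ a₂ c) := by
    rw [h.digitInt_eq_Ico hb, h.digitInt_eq_Ico hc, Ico_disjoint_Ico]
    exact (min_le_left _ _).trans (hle.trans (le_max_right _ _))
  have mem_zero : 0 ∈ greedyDigits a₁ a₂ := mem_greedyDigits.2 (.inl rfl)
  have mem_left : a₁ ∈ greedyDigits a₁ a₂ := mem_greedyDigits.2 (.inr (.inl rfl))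
  have mem_right : a₂ ∈ greedyDigits a₁ a₂ := mem_greedyDigits.2 (.inr (.inr rfl))
  have hle : a₁ / β ≤ a₂ / β := div_le_div_of_nonneg_right h.lt_digit.le h.beta_pos.le
  simp only [greedyDigits, Finset.coe_insert, Finset.coe_singleton, pairwiseDisjoint_insert,
    pairwiseDisjoint_singleton, true_and, forall_mem_insert, mem_singleton_iff, forall_eq]
  exact ⟨fun _ => disjoint_of_le mem_left mem_right h.digitSup_left.le,
    fun _ => disjoint_of_le mem_zero mem_left digitSup_zero.le,
    fun _ => disjoint_of_le mem_zero mem_right (digitSup_zero.trans_le hle)⟩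

theorem biUnion_digitInt : ⋃ b ∈ greedyDigits a₁ a₂, digitInt β a₁ a₂ b = Ico 0 a₁ := by
  have hβ := h.beta_pos
  have le_left : 0 ≤ a₁ / β := div_nonneg h.pos.le hβ.le
  have left_le_right : a₁ / β ≤ a₂ / β := div_le_div_of_nonneg_right h.lt_digit.le hβ.le
  have right_le : a₂ / β ≤ a₁ := (div_le_iff₀' hβ).2 h.lt_mul.le
  have digitInt_eq : ⋃ b ∈ greedyDigits a₁ a₂, digitInt β a₁ a₂ b =
      ⋃ b ∈ greedyDigits a₁ a₂, Ico (b / β) (digitSup β a₁ a₂ b) :=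
    iUnion₂_congr fun b hb => h.digitInt_eq_Ico hb
  rw [digitInt_eq]
  simp only [greedyDigits, Finset.set_biUnion_insert, Finset.set_biUnion_singleton, digitSup_zero,
    h.digitSup_left, h.digitSup_right, zero_div]
  rw [Ico_union_Ico_eq_Ico left_le_right right_le,
    Ico_union_Ico_eq_Ico le_left (left_le_right.trans right_le)]

theorem map_greedyT_restrict_Ico_inter_digitInt (hb : b ∈ greedyDigits a₁ a₂) (c : ℝ) :
    (volume.restrict (Ico 0 c ∩ digitInt β a₁ a₂ b)).map (greedyT β a₁ a₂) =
      ENNReal.ofReal β⁻¹ • volume.restrict (Ico 0 (branchLength β a₁ a₂ c b)) := by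
  have measurable_affine : Measurable fun x => β * x - b := by fun_prop
  have greedyT_ae_eq : greedyT β a₁ a₂ =ᵐ[volume.restrict (Ico 0 c ∩ digitInt β a₁ a₂ b)]
      fun x => β * x - b := by
    refine ae_restrict_of_forall_mem ?_ fun x hx => h.greedyT_eq_of_mem_digitInt hb hx.2
    rw [h.Ico_inter_digitInt hb]
    exact measurable_affine measurableSet_Ico
  rw [Measure.map_congr greedyT_ae_eq, h.Ico_inter_digitInt hb,
    ← Measure.restrict_map measurable_affine measurableSet_Ico, map_volume_mul_sub h.beta_pos,
    Measure.restrict_smul]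

theorem map_greedyT_restrict_Ico (hca : c ≤ a₁) :
    (volume.restrict (Ico 0 c)).map (greedyT β a₁ a₂) = ENNReal.ofReal β⁻¹ •
      ∑ b ∈ greedyDigits a₁ a₂, volume.restrict (Ico 0 (branchLength β a₁ a₂ c b)) := by
  have cover : Ico 0 c ⊆ ⋃ b ∈ greedyDigits a₁ a₂, digitInt β a₁ a₂ b :=
    (Ico_subset_Ico_right hca).trans_eq h.biUnion_digitInt.symm
  rw [restrict_eq_sum_restrict_inter volume h.pairwiseDisjoint_digitInt measurableSet_digitInt
    measurableSet_Ico cover, Measure.map_finset_sum measurable_greedyT.aemeasurable,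
    Finset.smul_sum]
  exact Finset.sum_congr rfl fun b hb => h.map_greedyT_restrict_Ico_inter_digitInt hb c

theorem exists_map_levelMeasure_eq (n : ℕ) :
    ∃ s : ENNReal, (levelMeasure β a₁ a₂ n).map (greedyT β a₁ a₂) =
      levelMeasure β a₁ a₂ (n + 1) + s • levelMeasure β a₁ a₂ 0 := by
  choose k hk using exists_sum_restrict_branchLength_eq (β := β) (a₁ := a₁) (a₂ := a₂)
  have hβ : ENNReal.ofReal (β ^ n)⁻¹ * ENNReal.ofReal β⁻¹ = ENNReal.ofReal (β ^ (n + 1))⁻¹ := by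
    rw [← ENNReal.ofReal_mul (inv_nonneg.2 (pow_nonneg h.beta_pos.le n)), pow_succ, mul_inv]
  refine ⟨ENNReal.ofReal (β ^ (n + 1))⁻¹ *
    ∑ w ∈ nonfullWords β a₁ a₂ n, k (imageLength β a₁ a₂ w), ?_⟩
  have map_word (w : List ℝ) (hw : w ∈ nonfullWords β a₁ a₂ n) :
      (volume.restrict (Ico 0 (imageLength β a₁ a₂ w))).map (greedyT β a₁ a₂) =
        ENNReal.ofReal β⁻¹ • (∑ b ∈ nonfullDigits β a₁ a₂ (imageLength β a₁ a₂ w),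
          volume.restrict (Ico 0 (branchLength β a₁ a₂ (imageLength β a₁ a₂ w) b)) +
            k (imageLength β a₁ a₂ w) • volume.restrict (Ico 0 a₁)) :=
    (h.map_greedyT_restrict_Ico (h.imageLength_mem_Ioc hw).2).trans (congr_arg _ (hk _))
  rw [levelMeasure, Measure.map_smul, Measure.map_finset_sum measurable_greedyT.aemeasurable,
    Finset.sum_congr rfl map_word, ← Finset.smul_sum, smul_smul, hβ, Finset.sum_add_distrib,
    ← sum_nonfullWords_succ fun c => volume.restrict (Ico 0 c), ← Finset.sum_smul, smul_add,
    smul_smul, levelMeasure_zero, levelMeasure]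

theorem measurePreserving_greedyT :
    MeasurePreserving (greedyT β a₁ a₂) (muMeas β a₁ a₂) (muMeas β a₁ a₂) := by
  have := h.isFiniteMeasure_muMeas
  rw [h.muMeas_eq_sum_levelMeasure] at this ⊢
  choose s hs using h.exists_map_levelMeasure_eq
  exact measurePreserving_sum_of_map_eq measurable_greedyT hs

theorem restrict_Ico_absolutelyContinuous_muMeas :
    volume.restrict (Ico 0 a₁) ≪ muMeas β a₁ a₂ := by
  rw [h.muMeas_eq_sum_levelMeasure, ← levelMeasure_zero]
  exact (Measure.le_sum _ 0).absolutelyContinuous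

end IsGreedyParam

end GreedyTransformation

/-- `μ` is a finite measure on `[0, a₁)` equivalent to Lebesgue
measure on `[0, a₁)`, and `μ` is invariant under the greedy β-transformation
`T`: for every Borel `E ⊆ [0, a₁)`, `μ(T⁻¹E) = μ(E)`. -/
theorem stmt12 (β a₁ a₂ : ℝ) (hβ1 : 1 < β) (hβ3 : β < 3)
    (ha₁ : 0 < a₁) (h12 : a₁ < a₂) (hc : condition6 β a₁ a₂) :
    IsFiniteMeasure (muMeas β a₁ a₂) ∧
    (∀ E : Set ℝ, E ⊆ Set.Ico 0 a₁ → MeasurableSet E →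
      (muMeas β a₁ a₂ E = 0 ↔ volume E = 0)) ∧
    (∀ E : Set ℝ, E ⊆ Set.Ico 0 a₁ → MeasurableSet E →
      muMeas β a₁ a₂ (greedyT β a₁ a₂ ⁻¹' E) = muMeas β a₁ a₂ E) := by
  have h : IsGreedyParam β a₁ a₂ := ⟨hβ1, ha₁, hc⟩
  refine ⟨h.isFiniteMeasure_muMeas, fun E hE _ => ?_,
    fun E _ hE => h.measurePreserving_greedyT.measure_preimage hE.nullMeasurableSet⟩
  rw [← Measure.restrict_eq_self volume hE]
  exact ⟨fun h0 => h.restrict_Ico_absolutelyContinuous_muMeas h0,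
    fun h0 => withDensity_absolutelyContinuous _ _ h0⟩
end

section
/- The greedy β-transformation T is ergodic with respect to the probability measure μ/μ([0, a₁)); i.e. T preserves this probability measure and every Borel set E ⊆ [0, a₁) with T⁻¹E = E has measure 0 or 1. (The paper proves the stronger statement that T is exact, hence mixing of all orders.) -/
open MeasureTheory Set

/-!
Write `λ` for Lebesgue measure. The image under `T` of `λ` restricted to `[0, t)`, with `t ≤ a₁`,
is `β⁻¹` times the sum over the digits `b` of `λ` restricted to an interval `[0, step t b)`. Call a
child `step t b` of `t` full if it equals `a₁`, and non-full if it lies strictly between `0` and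
`a₁`. The children of `t` add up to `β t`, and at most one more of them is non-full than full, so
the weights `a₁ + s` of the non-full children `s` of `t` add up to at most
`a₁ + β t ≤ (β + 1) / 2 * (a₁ + t)`. As `(β + 1) / 2 < β`, sums over generations of non-full
descendants, discounted by `β⁻¹` per generation, converge geometrically. This is used twice.

* The density `φ` collects the generations of non-full descendants of `a₁`. Hence `μ` is finite,
  and `T` shifts each generation to the next up to multiples of `λ` on `[0, a₁)`, so that
  `T_* μ + λ = μ + c λ`. Comparing total masses gives `c = 1`.
* If `E` is invariant and `c` is its density in `[0, a₁)`, then `t ↦ λ(E ∩ [0, t)) - c t` equals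
  `β⁻¹` times its sum over the children of `t` and vanishes at `0` and `a₁`, so only non-full
  children contribute and it is zero. By Lebesgue differentiation `E` is null or conull.
-/

namespace GreedyBeta

lemma forall_proper_prefix_append_singleton {α : Type*} {P : List α → Prop} (hnil : P [])
    {w : List α} {b : α} : (∀ w', w' ≠ [] → w' <+: w ++ [b] → w' ≠ w ++ [b] → P w') ↔
      P w ∧ ∀ w', w' ≠ [] → w' <+: w → w' ≠ w → P w' := by
  refine ⟨fun hP => ⟨?_, fun w' hne hw' _ => ?_⟩, ?_⟩
  · rcases eq_or_ne w [] with rfl | hne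
    · exact hnil
    · exact hP w hne (List.prefix_append w [b]) (by simp)
  · exact hP w' hne (hw'.trans (List.prefix_append w [b]))
      (by rintro rfl; simpa using hw'.length_le)
  · rintro ⟨hw, hP⟩ w' hne hw' hne'
    have hpre := (List.prefix_concat_iff.1 hw').resolve_left hne'
    rcases eq_or_ne w' w with rfl | hww
    exacts [hw, hP w' hne hpre hww]

section MeasureTheory

variable {α γ ι : Type*} [MeasurableSpace α] [MeasurableSpace γ] {μ ρ : Measure α}

lemma map_volume_mul_sub {β : ℝ} (hβ : 0 < β) (b : ℝ) :
    volume.map (fun x : ℝ => β * x - b) = ENNReal.ofReal β⁻¹ • volume := by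
  have hcomp : (fun x : ℝ => β * x - b) = (fun x => x - b) ∘ (fun x => β * x) := rfl
  rw [hcomp, ← Measure.map_map (by fun_prop) (by fun_prop), Real.map_volume_mul_left hβ.ne',
    Measure.map_smul, map_sub_right_eq_self, abs_of_pos (inv_pos.2 hβ)]

lemma map_restrict_eq_sum_of_eqOn {T : α → γ} (hT : Measurable T) {D : Finset ι} {s : Set α}
    (hs : MeasurableSet s) {P : ι → Set α} (hP : ∀ i, MeasurableSet (P i))
    (hdisj : (D : Set ι).PairwiseDisjoint P) (hcover : s ⊆ ⋃ i ∈ D, P i)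
    {φ : ι → α → γ} (hφ : ∀ i ∈ D, EqOn T (φ i) (P i)) :
    (μ.restrict s).map T = ∑ i ∈ D, (μ.restrict (s ∩ P i)).map (φ i) := by
  have hpieces : s = ⋃ i ∈ D, s ∩ P i := by
    rw [← inter_iUnion₂, inter_eq_left.2 hcover]
  have hrestrict : μ.restrict s = ∑ i ∈ D, μ.restrict (s ∩ P i) := by
    conv_lhs => rw [hpieces]
    rw [Measure.restrict_biUnion_finset
      (hdisj.mono_on fun i _ => inter_subset_right) fun i => hs.inter (hP i)]
    exact Measure.sum_coe_finset D fun i => μ.restrict (s ∩ P i)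
  rw [hrestrict, Measure.map_finset_sum hT.aemeasurable]
  refine Finset.sum_congr rfl fun i hi => Measure.map_congr ?_
  filter_upwards [ae_restrict_mem (hs.inter (hP i))] with x hx using hφ i hi hx.2

lemma map_eq_of_map_add_eq_add_smul [IsFiniteMeasure μ] [IsFiniteMeasure ρ] [NeZero ρ]
    {T : α → α} (hT : Measurable T) {c : ENNReal} (h : μ.map T + ρ = μ + c • ρ) :
    μ.map T = μ := by
  have hmass : 1 * ρ univ = c * ρ univ := by
    have := congrArg (fun ν : Measure α => ν univ) h
    simpa [Measure.map_apply hT, ENNReal.add_right_inj] using this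
  have hc : c = 1 :=
    ((ENNReal.mul_left_inj (NeZero.ne (ρ univ)) (measure_ne_top ρ univ)).1 hmass).symm
  rwa [hc, one_smul, Measure.add_left_inj] at h

/- By Lebesgue differentiation the indicator of `s` is a.e. equal to the slope `c`. -/
lemma eventuallyConst_of_measureReal_inter_Ico_eq_mul {s : Set ℝ} (hs : MeasurableSet s)
    {a c : ℝ} (h : ∀ t ∈ Icc 0 a, volume.real (s ∩ Ico 0 t) = c * t) :
    Filter.EventuallyConst s (ae (volume.restrict (Ico 0 a))) := by
  have hloc : LocallyIntegrable (s.indicator fun _ => (1 : ℝ)) volume :=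
    (locallyIntegrable_const 1).indicator hs
  have hint : ∀ t ∈ Icc 0 a, ∫ x in 0..t, s.indicator (fun _ => (1 : ℝ)) x = c * t := by
    intro t ht
    rw [← h t ht, intervalIntegral.integral_of_le ht.1, ← integral_Ico_eq_integral_Ioc,
      integral_indicator_const _ hs, smul_eq_mul, mul_one, measureReal_restrict_apply hs]
  have hconst : s.indicator (fun _ => (1 : ℝ)) =ᵐ[volume.restrict (Ico 0 a)] fun _ => c := by
    rw [← restrict_Ioo_eq_restrict_Ico]
    filter_upwards [ae_restrict_of_ae (LocallyIntegrable.ae_hasDerivAt_integral hloc),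
      ae_restrict_mem measurableSet_Ioo] with x hx hxa
    have hlin : HasDerivAt (fun t => ∫ x in 0..t, s.indicator (fun _ => (1 : ℝ)) x) c x := by
      refine (hasDerivAt_const_mul c).congr_of_eventuallyEq ?_
      filter_upwards [Icc_mem_nhds hxa.1 hxa.2] with t ht using hint t ht
    exact (hx 0).unique hlin
  exact Filter.EventuallyConst.of_indicator_const
    ((Filter.EventuallyConst.const c).congr hconst.symm) one_ne_zero

end MeasureTheory

/-- The parameters for which `greedyT β a₁ a₂` is studied: `0 < a₁` and condition (6). -/
structure Admissible (β a₁ a₂ : ℝ) : Prop where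
  pos : 0 < a₁
  cond : condition6 β a₁ a₂

/-- The alphabet `A = {0, a₁, a₂}`. -/
noncomputable def digits (a₁ a₂ : ℝ) : Finset ℝ := {0, a₁, a₂}

/-- The length of `T Δ(b)`, an interval starting at `0`. -/
noncomputable def branchLength (β a₁ a₂ b : ℝ) : ℝ :=
  if b = 0 then a₁ else if b = a₁ then a₂ - a₁ else β * a₁ - a₂

/-- The length of `T (Δ(b) ∩ [0, t))`, an interval starting at `0`; empty images get length `0`. -/
noncomputable def step (β a₁ a₂ t b : ℝ) : ℝ :=
  max 0 (min (β * t - b) (branchLength β a₁ a₂ b))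

/-- The digits `b` for which `T (Δ(b) ∩ [0, t))` is all of `[0, a₁)`. -/
noncomputable def fullDigits (β a₁ a₂ t : ℝ) : Finset ℝ :=
  {b ∈ digits a₁ a₂ | step β a₁ a₂ t b = a₁}

/-- The digits `b` for which `T (Δ(b) ∩ [0, t))` is neither empty nor all of `[0, a₁)`. -/
noncomputable def nonfullDigits (β a₁ a₂ t : ℝ) : Finset ℝ :=
  {b ∈ digits a₁ a₂ | step β a₁ a₂ t b ∈ Ioo 0 a₁}

variable {β a₁ a₂ : ℝ}

lemma mem_digits {b : ℝ} : b ∈ digits a₁ a₂ ↔ b = 0 ∨ b = a₁ ∨ b = a₂ := by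
  simp only [digits, Finset.mem_insert, Finset.mem_singleton]

lemma measurable_greedyT : Measurable (greedyT β a₁ a₂) := by
  unfold greedyT
  exact .ite measurableSet_Iio (by fun_prop) (.ite measurableSet_Iio (by fun_prop) (by fun_prop))

lemma measurableSet_digitInt (b : ℝ) : MeasurableSet (digitInt β a₁ a₂ b) := by
  unfold digitInt
  split_ifs <;> exact measurableSet_Ico

namespace Admissible

lemma lt (h : Admissible β a₁ a₂) : a₁ < a₂ :=
  (le_mul_of_one_le_right h.pos.le (le_max_right _ _)).trans_lt h.cond.1

lemma lt_mul (h : Admissible β a₁ a₂) : a₂ < β * a₁ := by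
  rw [mul_comm]
  exact h.cond.2.trans_le (mul_le_mul_of_nonneg_left (min_le_right _ _) h.pos.le)

lemma lt_two_mul (h : Admissible β a₁ a₂) : a₂ < 2 * a₁ := by
  rw [mul_comm]
  exact h.cond.2.trans_le (mul_le_mul_of_nonneg_left (min_le_left _ _) h.pos.le)

lemma mul_sub_lt (h : Admissible β a₁ a₂) : β * a₁ - a₂ < a₁ := by
  have := (mul_le_mul_of_nonneg_left (le_max_left (β - 1) 1) h.pos.le).trans_lt h.cond.1
  linarith

lemma one_lt (h : Admissible β a₁ a₂) : 1 < β :=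
  (lt_mul_iff_one_lt_left h.pos).1 (h.lt.trans h.lt_mul)

lemma beta_pos (h : Admissible β a₁ a₂) : 0 < β := one_pos.trans h.one_lt

lemma digits_ne (h : Admissible β a₁ a₂) : a₁ ≠ 0 ∧ a₂ ≠ 0 ∧ a₂ ≠ a₁ :=
  ⟨h.pos.ne', (h.pos.trans h.lt).ne', h.lt.ne'⟩

lemma digit_nonneg (h : Admissible β a₁ a₂) {b : ℝ} (hb : b ∈ digits a₁ a₂) : 0 ≤ b := by
  rcases mem_digits.1 hb with rfl | rfl | rfl
  exacts [le_rfl, h.pos.le, (h.pos.trans h.lt).le]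

lemma branchLength_mem_Icc (h : Admissible β a₁ a₂) (b : ℝ) :
    branchLength β a₁ a₂ b ∈ Icc 0 a₁ := by
  have := h.lt
  have := h.lt_mul
  have := h.lt_two_mul
  have := h.mul_sub_lt
  unfold branchLength
  split_ifs <;> constructor <;> linarith

lemma digitInt_eq_preimage (h : Admissible β a₁ a₂) {b : ℝ} (hb : b ∈ digits a₁ a₂) :
    digitInt β a₁ a₂ b = (fun x => β * x - b) ⁻¹' Ico 0 (branchLength β a₁ a₂ b) := by
  obtain ⟨h₁, h₂, h₁₂⟩ := h.digits_ne
  have hβ := h.beta_pos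
  have hβa : β * a₁ / β = a₁ := mul_div_cancel_left₀ a₁ hβ.ne'
  have hpre : ∀ r, (fun x => β * x - b) ⁻¹' Ico 0 r = Ico (b / β) ((r + b) / β) := fun r => by
    ext x
    simp only [mem_preimage, mem_Ico, sub_nonneg, sub_lt_iff_lt_add, div_le_iff₀' hβ,
      lt_div_iff₀' hβ]
  rw [hpre]
  rcases mem_digits.1 hb with rfl | rfl | rfl <;>
    simp [digitInt, branchLength, h₁, h₂, h₁₂, hβa]

lemma eqOn_greedyT (h : Admissible β a₁ a₂) {b : ℝ} (hb : b ∈ digits a₁ a₂) :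
    EqOn (greedyT β a₁ a₂) (fun x => β * x - b) (digitInt β a₁ a₂ b) := by
  obtain ⟨h₁, h₂, h₁₂⟩ := h.digits_ne
  have hlt : a₁ / β < a₂ / β := div_lt_div_of_pos_right h.lt h.beta_pos
  intro x hx
  rcases mem_digits.1 hb with rfl | rfl | rfl <;>
    simp only [digitInt, h₁, h₂, h₁₂, if_true, if_false, mem_Ico] at hx
  · simp [greedyT, hx.2]
  · simp [greedyT, hx.2, hx.1.not_gt]
  · simp [greedyT, hx.1.not_gt, (hlt.le.trans hx.1).not_gt]

lemma pairwiseDisjoint_digitInt (h : Admissible β a₁ a₂) :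
    (digits a₁ a₂ : Set ℝ).PairwiseDisjoint (digitInt β a₁ a₂) := by
  obtain ⟨h₁, h₂, h₁₂⟩ := h.digits_ne
  have hlt : a₁ / β < a₂ / β := div_lt_div_of_pos_right h.lt h.beta_pos
  intro b hb c hc hbc
  rw [Function.onFun, Set.disjoint_left]
  intro x hxb hxc
  rcases mem_digits.1 hb with rfl | rfl | rfl <;> rcases mem_digits.1 hc with rfl | rfl | rfl <;>
    simp only [digitInt, h₁, h₂, h₁₂, if_true, if_false, mem_Ico] at hxb hxc <;>
    first | exact hbc rfl | linarith

lemma biUnion_digitInt (h : Admissible β a₁ a₂) :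
    ⋃ b ∈ digits a₁ a₂, digitInt β a₁ a₂ b = Ico 0 a₁ := by
  obtain ⟨h₁, h₂, h₁₂⟩ := h.digits_ne
  have hlt : a₁ / β < a₂ / β := div_lt_div_of_pos_right h.lt h.beta_pos
  have hlt' : a₂ / β < a₁ := (div_lt_iff₀' h.beta_pos).2 h.lt_mul
  simp only [digits, Finset.set_biUnion_insert, Finset.set_biUnion_singleton, digitInt, h₁, h₂, h₁₂,
    if_true, if_false]
  rw [Ico_union_Ico_eq_Ico hlt.le hlt'.le,
    Ico_union_Ico_eq_Ico (div_pos h.pos h.beta_pos).le (hlt.trans hlt').le]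

lemma step_mem_Icc (h : Admissible β a₁ a₂) (t b : ℝ) : step β a₁ a₂ t b ∈ Icc 0 a₁ :=
  ⟨le_max_left _ _,
    max_le h.pos.le ((min_le_right _ _).trans (h.branchLength_mem_Icc b).2)⟩

lemma Ico_inter_digitInt (h : Admissible β a₁ a₂) (t : ℝ) {b : ℝ} (hb : b ∈ digits a₁ a₂) :
    Ico 0 t ∩ digitInt β a₁ a₂ b = (fun x => β * x - b) ⁻¹' Ico 0 (step β a₁ a₂ t b) := by
  rw [h.digitInt_eq_preimage hb]
  ext x
  have hlt : x < t ↔ β * x - b < β * t - b := by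
    rw [sub_lt_sub_iff_right, mul_lt_mul_iff_right₀ h.beta_pos]
  have hnonneg : 0 ≤ β * x - b → 0 ≤ x := fun hx =>
    nonneg_of_mul_nonneg_right ((h.digit_nonneg hb).trans (sub_nonneg.1 hx)) h.beta_pos
  simp only [mem_inter_iff, mem_preimage, mem_Ico, step, lt_max_iff, lt_min_iff, hlt]
  grind

lemma map_restrict_Ico (h : Admissible β a₁ a₂) {t : ℝ} (ht : t ≤ a₁) :
    (volume.restrict (Ico 0 t)).map (greedyT β a₁ a₂) =
      ENNReal.ofReal β⁻¹ • ∑ b ∈ digits a₁ a₂, volume.restrict (Ico 0 (step β a₁ a₂ t b)) := by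
  rw [map_restrict_eq_sum_of_eqOn measurable_greedyT measurableSet_Ico measurableSet_digitInt
    h.pairwiseDisjoint_digitInt (h.biUnion_digitInt ▸ Ico_subset_Ico_right ht)
    fun b hb => h.eqOn_greedyT hb, Finset.smul_sum]
  refine Finset.sum_congr rfl fun b hb => ?_
  rw [h.Ico_inter_digitInt t hb, ← Measure.restrict_map (by fun_prop) measurableSet_Ico,
    map_volume_mul_sub h.beta_pos, Measure.restrict_smul]

lemma measureReal_preimage_inter_Ico (h : Admissible β a₁ a₂) {t : ℝ} (ht : t ≤ a₁) {s : Set ℝ}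
    (hs : MeasurableSet s) :
    volume.real (greedyT β a₁ a₂ ⁻¹' s ∩ Ico 0 t) =
      β⁻¹ * ∑ b ∈ digits a₁ a₂, volume.real (s ∩ Ico 0 (step β a₁ a₂ t b)) := by
  have := congrArg (fun ν : Measure ℝ => ν.real s) (h.map_restrict_Ico ht)
  simpa [Measure.real, Measure.map_apply measurable_greedyT hs, measurable_greedyT hs,
    Measure.restrict_apply, hs, ENNReal.toReal_sum, h.beta_pos.le,
    (measure_mono inter_subset_right).trans_lt measure_Ico_lt_top |>.ne] using this

lemma sum_step (h : Admissible β a₁ a₂) {t : ℝ} (ht : t ∈ Icc 0 a₁) :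
    ∑ b ∈ digits a₁ a₂, step β a₁ a₂ t b = β * t := by
  have hmass := h.measureReal_preimage_inter_Ico ht.2 MeasurableSet.univ
  simp only [preimage_univ, univ_inter, Real.volume_real_Ico_of_le ht.1, sub_zero,
    Real.volume_real_Ico_of_le (h.step_mem_Icc t _).1] at hmass
  exact ((eq_inv_mul_iff_mul_eq₀ h.beta_pos.ne').1 hmass).symm

lemma sum_digits_step (h : Admissible β a₁ a₂) {M : Type*} [AddCommMonoid M] {f : ℝ → M}
    (hf : f 0 = 0) (t : ℝ) :
    ∑ b ∈ digits a₁ a₂, f (step β a₁ a₂ t b) =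
      ∑ b ∈ nonfullDigits β a₁ a₂ t, f (step β a₁ a₂ t b) + (fullDigits β a₁ a₂ t).card • f a₁ := by
  rw [nonfullDigits, fullDigits, Finset.card_filter, Finset.sum_smul, Finset.sum_filter,
    ← Finset.sum_add_distrib]
  refine Finset.sum_congr rfl fun b _ => ?_
  rcases (h.step_mem_Icc t b).1.eq_or_lt with h₀ | h₀
  · simp [← h₀, hf, h.pos.ne]
  rcases (h.step_mem_Icc t b).2.eq_or_lt with h₁ | h₁
  · simp [h₁]
  · simp [h₀, h₁, h₁.ne]

lemma card_nonfullDigits_le (h : Admissible β a₁ a₂) (t : ℝ) :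
    (nonfullDigits β a₁ a₂ t).card ≤ (fullDigits β a₁ a₂ t).card + 1 := by
  rcases le_or_gt a₁ (β * t) with ht | ht
  · have hfull : 0 ∈ fullDigits β a₁ a₂ t :=
      Finset.mem_filter.2 ⟨by simp [digits], by simp [step, branchLength, ht, h.pos.le]⟩
    have hsub : nonfullDigits β a₁ a₂ t ⊆ {a₁, a₂} := by
      intro b hb
      obtain ⟨hbd, hb⟩ := Finset.mem_filter.1 hb
      rcases mem_digits.1 hbd with rfl | hb'
      · exact absurd (Finset.mem_filter.1 hfull).2 hb.2.ne
      · simpa using hb'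
    have := Finset.card_pos.2 ⟨0, hfull⟩
    have := (Finset.card_le_card hsub).trans Finset.card_le_two
    omega
  · have hsub : nonfullDigits β a₁ a₂ t ⊆ {0} := by
      intro b hb
      obtain ⟨hbd, hb⟩ := Finset.mem_filter.1 hb
      have hbt : b < β * t :=
        sub_pos.1 (lt_min_iff.1 ((lt_max_iff.1 hb.1).resolve_left (lt_irrefl 0))).1
      rcases mem_digits.1 hbd with rfl | rfl | rfl
      · simp
      · exact absurd hbt ht.not_gt
      · exact absurd hbt (ht.trans h.lt).not_gt
    exact (Finset.card_le_card hsub).trans (by simp)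

lemma sum_nonfullDigits_le (h : Admissible β a₁ a₂) {t : ℝ} (ht : t ∈ Icc 0 a₁) :
    ∑ b ∈ nonfullDigits β a₁ a₂ t, (a₁ + step β a₁ a₂ t b) ≤ (β + 1) / 2 * (a₁ + t) := by
  have hsum := h.sum_digits_step (f := id) rfl t
  simp only [id, h.sum_step ht, nsmul_eq_mul] at hsum
  have hcard : ((nonfullDigits β a₁ a₂ t).card : ℝ) ≤ (fullDigits β a₁ a₂ t).card + 1 :=
    mod_cast h.card_nonfullDigits_le t
  calc ∑ b ∈ nonfullDigits β a₁ a₂ t, (a₁ + step β a₁ a₂ t b)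
      = (nonfullDigits β a₁ a₂ t).card * a₁ + ∑ b ∈ nonfullDigits β a₁ a₂ t, step β a₁ a₂ t b := by
        rw [Finset.sum_add_distrib, Finset.sum_const, nsmul_eq_mul]
    _ ≤ a₁ + β * t := by
        linarith [mul_le_mul_of_nonneg_right hcard h.pos.le]
    _ ≤ (β + 1) / 2 * (a₁ + t) := by
        linarith [mul_le_mul_of_nonneg_left ht.2 (sub_nonneg.2 h.one_lt.le)]

lemma abs_inv_mul_sum_step_le (h : Admissible β a₁ a₂) {f : ℝ → ℝ} (hf₀ : f 0 = 0)
    (hf₁ : f a₁ = 0) {K : ℝ} (hK : 0 ≤ K) (hf : ∀ t ∈ Icc 0 a₁, |f t| ≤ K * (a₁ + t)) {t : ℝ}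
    (ht : t ∈ Icc 0 a₁) :
    |β⁻¹ * ∑ b ∈ digits a₁ a₂, f (step β a₁ a₂ t b)| ≤ (β + 1) / (2 * β) * K * (a₁ + t) := by
  have hβ := h.beta_pos
  rw [h.sum_digits_step hf₀, hf₁, smul_zero, add_zero, abs_mul, abs_of_pos (inv_pos.2 hβ)]
  calc β⁻¹ * |∑ b ∈ nonfullDigits β a₁ a₂ t, f (step β a₁ a₂ t b)|
      ≤ β⁻¹ * ∑ b ∈ nonfullDigits β a₁ a₂ t, K * (a₁ + step β a₁ a₂ t b) := by
        gcongr
        exact (Finset.abs_sum_le_sum_abs _ _).trans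
          (Finset.sum_le_sum fun b _ => hf _ (h.step_mem_Icc t b))
    _ ≤ β⁻¹ * (K * ((β + 1) / 2 * (a₁ + t))) := by
        rw [← Finset.mul_sum]
        gcongr
        exact h.sum_nonfullDigits_le ht
    _ = (β + 1) / (2 * β) * K * (a₁ + t) := by
        field_simp

lemma eqOn_zero_of_eq_inv_mul_sum_step (h : Admissible β a₁ a₂) {f : ℝ → ℝ} (hf₀ : f 0 = 0)
    (hf₁ : f a₁ = 0) {K : ℝ} (hK : 0 ≤ K) (hbound : ∀ t ∈ Icc 0 a₁, |f t| ≤ K * (a₁ + t))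
    (hfix : ∀ t ∈ Icc 0 a₁, f t = β⁻¹ * ∑ b ∈ digits a₁ a₂, f (step β a₁ a₂ t b)) :
    EqOn f 0 (Icc 0 a₁) := by
  have hβ := h.beta_pos
  set θ : ℝ := (β + 1) / (2 * β)
  have hθ₀ : 0 ≤ θ := by positivity
  have hθ₁ : θ < 1 := (div_lt_one (by positivity)).2 (by linarith [h.one_lt])
  have hiter : ∀ n : ℕ, ∀ t ∈ Icc 0 a₁, |f t| ≤ θ ^ n * K * (a₁ + t) := by
    intro n
    induction n with
    | zero => simpa using hbound
    | succ n ih =>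
      intro t ht
      rw [hfix t ht, pow_succ', mul_assoc θ]
      exact h.abs_inv_mul_sum_step_le hf₀ hf₁ (by positivity) ih ht
  intro t ht
  have hlim : Filter.Tendsto (fun n : ℕ => θ ^ n * K * (a₁ + t)) Filter.atTop (nhds 0) := by
    simpa using ((tendsto_pow_atTop_nhds_zero_of_lt_one hθ₀ hθ₁).mul_const K).mul_const (a₁ + t)
  exact abs_nonpos_iff.1 (ge_of_tendsto' hlim fun n => hiter n t ht)

lemma measureReal_inter_Ico_eq_mul (h : Admissible β a₁ a₂) {s : Set ℝ} (hs : MeasurableSet s)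
    (hinv : greedyT β a₁ a₂ ⁻¹' s = s) {t : ℝ} (ht : t ∈ Icc 0 a₁) :
    volume.real (s ∩ Ico 0 t) = volume.real (s ∩ Ico 0 a₁) / a₁ * t := by
  set c : ℝ := volume.real (s ∩ Ico 0 a₁) / a₁
  have hbound : ∀ t ∈ Icc 0 a₁, |volume.real (s ∩ Ico 0 t) - c * t| ≤ (1 + |c|) * (a₁ + t) := by
    intro t ht
    have hle : |volume.real (s ∩ Ico 0 t)| ≤ t := by
      rw [abs_of_nonneg measureReal_nonneg]
      simpa [Real.volume_real_Ico_of_le ht.1] using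
        measureReal_mono (μ := volume) (inter_subset_right (s := s) (t := Ico 0 t))
          measure_Ico_lt_top.ne
    calc |volume.real (s ∩ Ico 0 t) - c * t| ≤ t + |c| * t := by
          simpa only [abs_mul, abs_of_nonneg ht.1] using
            (abs_sub _ _).trans (add_le_add_left hle |c * t|)
      _ ≤ (1 + |c|) * (a₁ + t) := by
          linarith [mul_nonneg (add_nonneg zero_le_one (abs_nonneg c)) h.pos.le]
  refine sub_eq_zero.1 <| h.eqOn_zero_of_eq_inv_mul_sum_step
    (f := fun t => volume.real (s ∩ Ico 0 t) - c * t) (by simp) ?_ (by positivity) hbound ?_ ht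
  · exact sub_eq_zero.2 (div_mul_cancel₀ _ h.pos.ne').symm
  · intro t ht
    have hmeas := h.measureReal_preimage_inter_Ico ht.2 hs
    rw [hinv] at hmeas
    rw [Finset.sum_sub_distrib, ← Finset.mul_sum, h.sum_step ht, mul_sub, ← hmeas]
    field_simp [h.beta_pos.ne']

lemma preErgodic_restrict (h : Admissible β a₁ a₂) :
    PreErgodic (greedyT β a₁ a₂) (volume.restrict (Ico 0 a₁)) where
  aeconst_set _ hs hinv := eventuallyConst_of_measureReal_inter_Ico_eq_mul hs fun _ =>
    h.measureReal_inter_Ico_eq_mul hs hinv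

end Admissible

/-- The right endpoint of the interval `Tⁿ(Δ(w) ∩ [0, a₁))`, which starts at `0`, for a word `w` of
length `n`. -/
noncomputable def endpoint (β a₁ a₂ : ℝ) (w : List ℝ) : ℝ := w.foldl (step β a₁ a₂) a₁

/-- The set `Bₙ`, generated by appending digits; `B₀` consists of the empty word. -/
noncomputable def nonfullWords (β a₁ a₂ : ℝ) : ℕ → Finset (List ℝ)
  | 0 => {[]}
  | n + 1 =>
    ((nonfullWords β a₁ a₂ n).sigma fun w => nonfullDigits β a₁ a₂ (endpoint β a₁ a₂ w)).image
      fun p => p.1 ++ [p.2]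

/-- The contribution of `Bₙ` to the invariant measure `muMeas`: `β⁻ⁿ` times the sum over `w ∈ Bₙ` of
Lebesgue measure on `Tⁿ Δ(w)`; the empty word contributes Lebesgue measure on `[0, a₁)`. -/
noncomputable def levelMeasure (β a₁ a₂ : ℝ) (n : ℕ) : Measure ℝ :=
  ENNReal.ofReal (β ^ n)⁻¹ •
    ∑ w ∈ nonfullWords β a₁ a₂ n, volume.restrict (Ico 0 (endpoint β a₁ a₂ w))

/-- The density of `levelMeasure β a₁ a₂ n`, which is the term of index `n` in the series `φ`. -/
noncomputable def levelDensity (β a₁ a₂ : ℝ) (n : ℕ) (x : ℝ) : ℝ :=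
  ∑ w ∈ nonfullWords β a₁ a₂ n, (Ico 0 (endpoint β a₁ a₂ w)).indicator (fun _ => (β ^ n)⁻¹) x

lemma endpoint_append_singleton (w : List ℝ) (b : ℝ) :
    endpoint β a₁ a₂ (w ++ [b]) = step β a₁ a₂ (endpoint β a₁ a₂ w) b := by
  rw [endpoint, List.foldl_concat, endpoint]

lemma isWord_append_singleton {w : List ℝ} {b : ℝ} :
    isWord a₁ a₂ (w ++ [b]) ↔ isWord a₁ a₂ w ∧ b ∈ digits a₁ a₂ := by
  simp only [isWord, mem_digits, List.forall_mem_append, List.forall_mem_singleton]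

lemma cyl_nil : cyl β a₁ a₂ [] = univ := by
  simp [cyl]

lemma not_isFull_nil : ¬ isFull β a₁ a₂ [] := by
  simp [isFull, cyl_nil]

lemma cyl_append_singleton (w : List ℝ) (b : ℝ) :
    cyl β a₁ a₂ (w ++ [b]) =
      cyl β a₁ a₂ w ∩ (greedyT β a₁ a₂)^[w.length] ⁻¹' digitInt β a₁ a₂ b := by
  have hinit : ∀ k ∈ Finset.range w.length, (w ++ [b]).getD k 0 = w.getD k 0 := fun k hk =>
    List.getD_append w [b] 0 k (Finset.mem_range.1 hk)
  have hlast : (w ++ [b]).getD w.length 0 = b := by simp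
  rw [cyl, List.length_append, List.length_singleton, Finset.range_add_one,
    Finset.set_biInter_insert, hlast, inter_comm, cyl]
  congr 1
  exact iInter₂_congr fun k hk => by rw [hinit k hk]

lemma sum_nonfullWords_succ {M : Type*} [AddCommMonoid M] (f : List ℝ → M) (n : ℕ) :
    ∑ w ∈ nonfullWords β a₁ a₂ (n + 1), f w =
      ∑ w ∈ nonfullWords β a₁ a₂ n, ∑ b ∈ nonfullDigits β a₁ a₂ (endpoint β a₁ a₂ w),
        f (w ++ [b]) := by
  rw [nonfullWords, Finset.sum_image, Finset.sum_sigma]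
  rintro ⟨w, b⟩ - ⟨w', b'⟩ - heq
  obtain ⟨hw, hb⟩ := List.append_inj' heq rfl
  cases hw
  cases hb
  rfl

namespace Admissible

lemma endpoint_mem_Icc (h : Admissible β a₁ a₂) (w : List ℝ) :
    endpoint β a₁ a₂ w ∈ Icc 0 a₁ := by
  induction w using List.reverseRecOn with
  | nil => exact right_mem_Icc.2 h.pos.le
  | append_singleton w b _ => exact endpoint_append_singleton w b ▸ h.step_mem_Icc _ b

lemma exists_eqOn_iterate_cyl (h : Admissible β a₁ a₂) {w : List ℝ} (hw : isWord a₁ a₂ w) :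
    ∃ p, EqOn (greedyT β a₁ a₂)^[w.length] (fun x => β ^ w.length * x - p) (cyl β a₁ a₂ w) ∧
      cyl β a₁ a₂ w ∩ Ico 0 a₁ =
        (fun x => β ^ w.length * x - p) ⁻¹' Ico 0 (endpoint β a₁ a₂ w) := by
  induction w using List.reverseRecOn with
  | nil => exact ⟨0, fun x _ => by simp, by simp [cyl_nil, endpoint]⟩
  | append_singleton w b ih =>
    obtain ⟨hw, hb⟩ := isWord_append_singleton.1 hw
    obtain ⟨p, hmap, hcyl⟩ := ih hw
    set L : ℝ → ℝ := fun x => β ^ w.length * x - p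
    have hL : (fun x => β ^ (w ++ [b]).length * x - (β * p + b)) = (fun y => β * y - b) ∘ L := by
      funext x
      simp only [L, Function.comp_apply, List.length_append, List.length_singleton]
      ring
    refine ⟨β * p + b, ?_, ?_⟩ <;> rw [hL, cyl_append_singleton]
    · rintro x ⟨hxw, hxb⟩
      rw [List.length_append, List.length_singleton, Function.iterate_succ_apply',
        h.eqOn_greedyT hb hxb, hmap hxw, Function.comp_apply]
    · have hdigit : cyl β a₁ a₂ w ∩ (greedyT β a₁ a₂)^[w.length] ⁻¹' digitInt β a₁ a₂ b =
          cyl β a₁ a₂ w ∩ L ⁻¹' digitInt β a₁ a₂ b := hmap.inter_preimage_eq _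
      rw [hdigit, inter_right_comm, hcyl, ← preimage_inter, h.Ico_inter_digitInt _ hb,
        ← preimage_comp, endpoint_append_singleton]

lemma cyl_subset_Ico (h : Admissible β a₁ a₂) {w : List ℝ} (hw : isWord a₁ a₂ w) (hne : w ≠ []) :
    cyl β a₁ a₂ w ⊆ Ico 0 a₁ := by
  obtain ⟨b, w, rfl⟩ := List.exists_cons_of_ne_nil hne
  have hb : b ∈ digits a₁ a₂ := mem_digits.2 (hw b List.mem_cons_self)
  have hcyl : cyl β a₁ a₂ (b :: w) ⊆ digitInt β a₁ a₂ b :=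
    biInter_subset_of_mem (Finset.mem_coe.2 (Finset.mem_range.2 w.length.succ_pos))
  exact hcyl.trans (h.biUnion_digitInt ▸ subset_biUnion_of_mem (u := digitInt β a₁ a₂) hb)

lemma volume_cyl (h : Admissible β a₁ a₂) {w : List ℝ} (hw : isWord a₁ a₂ w) (hne : w ≠ []) :
    volume (cyl β a₁ a₂ w) = ENNReal.ofReal (endpoint β a₁ a₂ w / β ^ w.length) := by
  obtain ⟨p, -, hcyl⟩ := h.exists_eqOn_iterate_cyl hw
  have hpow : 0 < β ^ w.length := pow_pos h.beta_pos _
  rw [inter_eq_left.2 (h.cyl_subset_Ico hw hne)] at hcyl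
  rw [hcyl, ← Measure.map_apply (by fun_prop) measurableSet_Ico, map_volume_mul_sub hpow,
    Measure.smul_apply, Real.volume_Ico, sub_zero, smul_eq_mul,
    ← ENNReal.ofReal_mul (inv_pos.2 hpow).le, inv_mul_eq_div]

lemma image_iterate_cyl (h : Admissible β a₁ a₂) {w : List ℝ} (hw : isWord a₁ a₂ w)
    (hne : w ≠ []) :
    (greedyT β a₁ a₂)^[w.length] '' cyl β a₁ a₂ w = Ico 0 (endpoint β a₁ a₂ w) := by
  obtain ⟨p, hmap, hcyl⟩ := h.exists_eqOn_iterate_cyl hw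
  have hpow : β ^ w.length ≠ 0 := (pow_pos h.beta_pos _).ne'
  rw [inter_eq_left.2 (h.cyl_subset_Ico hw hne)] at hcyl
  rw [hmap.image_eq, hcyl]
  exact image_preimage_eq _ fun y => ⟨(y + p) / β ^ w.length, by field_simp; ring⟩

lemma isFull_iff (h : Admissible β a₁ a₂) {w : List ℝ} (hw : isWord a₁ a₂ w) (hne : w ≠ []) :
    isFull β a₁ a₂ w ↔ endpoint β a₁ a₂ w = a₁ := by
  have hpow : 0 < β ^ w.length := pow_pos h.beta_pos _
  rw [isFull, h.volume_cyl hw hne, ENNReal.ofReal_eq_ofReal_iff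
    (div_nonneg (h.endpoint_mem_Icc w).1 hpow.le) (div_nonneg h.pos.le hpow.le),
    div_left_inj' hpow.ne']

lemma memB_append_singleton (h : Admissible β a₁ a₂) {n : ℕ} {w : List ℝ} {b : ℝ} :
    memB β a₁ a₂ (n + 1) (w ++ [b]) ↔
      memB β a₁ a₂ n w ∧ b ∈ nonfullDigits β a₁ a₂ (endpoint β a₁ a₂ w) := by
  have hne : w ++ [b] ≠ [] := by simp
  have hnonfull : isWord a₁ a₂ (w ++ [b]) →
      (0 < volume (cyl β a₁ a₂ (w ++ [b])) ∧ ¬ isFull β a₁ a₂ (w ++ [b]) ↔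
        step β a₁ a₂ (endpoint β a₁ a₂ w) b ∈ Ioo 0 a₁) := by
    intro hw
    rw [h.isFull_iff hw hne, h.volume_cyl hw hne, ENNReal.ofReal_pos,
      div_pos_iff_of_pos_right (pow_pos h.beta_pos _), endpoint_append_singleton, mem_Ioo, ← ne_eq,
      ← (h.step_mem_Icc _ b).2.lt_iff_ne]
  have hvol : volume (cyl β a₁ a₂ (w ++ [b])) ≤ volume (cyl β a₁ a₂ w) :=
    measure_mono (cyl_append_singleton w b ▸ inter_subset_left)
  rw [memB, memB, forall_proper_prefix_append_singleton not_isFull_nil, List.length_append,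
    List.length_singleton, add_left_inj, isWord_append_singleton, nonfullDigits,
    Finset.mem_filter]
  rw [isWord_append_singleton] at hnonfull
  constructor
  · rintro ⟨hlen, ⟨hw, hb⟩, hpos, hfull, hwfull, hpre⟩
    exact ⟨⟨hlen, hw, hpos.trans_le hvol, hwfull, hpre⟩, hb, (hnonfull ⟨hw, hb⟩).1 ⟨hpos, hfull⟩⟩
  · rintro ⟨⟨hlen, hw, -, hwfull, hpre⟩, hb, hstep⟩
    obtain ⟨hpos, hfull⟩ := (hnonfull ⟨hw, hb⟩).2 hstep
    exact ⟨hlen, ⟨hw, hb⟩, hpos, hfull, hwfull, hpre⟩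

lemma mem_nonfullWords (h : Admissible β a₁ a₂) {n : ℕ} {w : List ℝ} :
    w ∈ nonfullWords β a₁ a₂ n ↔ memB β a₁ a₂ n w := by
  induction w using List.reverseRecOn generalizing n with
  | nil =>
    cases n with
    | zero =>
      have hnil : ∀ w' : List ℝ, w' ≠ [] → ¬ w' <+: [] := fun _ hw' hp =>
        hw' (List.prefix_nil.1 hp)
      simp +contextual [nonfullWords, memB, isWord, not_isFull_nil, cyl_nil, hnil]
    | succ n => simp [nonfullWords, memB]
  | append_singleton w b ih =>
    cases n with
    | zero => simp [nonfullWords, memB]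
    | succ n => simp [nonfullWords, h.memB_append_singleton, ← ih]

lemma sum_add_endpoint_le (h : Admissible β a₁ a₂) (n : ℕ) :
    ∑ w ∈ nonfullWords β a₁ a₂ n, (a₁ + endpoint β a₁ a₂ w) ≤ ((β + 1) / 2) ^ n * (2 * a₁) := by
  induction n with
  | zero => simp [nonfullWords, endpoint, two_mul]
  | succ n ih =>
    have hβ := h.beta_pos
    calc ∑ w ∈ nonfullWords β a₁ a₂ (n + 1), (a₁ + endpoint β a₁ a₂ w)
        ≤ ∑ w ∈ nonfullWords β a₁ a₂ n, (β + 1) / 2 * (a₁ + endpoint β a₁ a₂ w) := by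
          simp only [sum_nonfullWords_succ, endpoint_append_singleton]
          exact Finset.sum_le_sum fun w _ => h.sum_nonfullDigits_le (h.endpoint_mem_Icc w)
      _ ≤ ((β + 1) / 2) ^ (n + 1) * (2 * a₁) := by
          rw [← Finset.mul_sum, pow_succ', mul_assoc]
          gcongr

lemma card_nonfullWords_le (h : Admissible β a₁ a₂) (n : ℕ) :
    ((nonfullWords β a₁ a₂ n).card : ℝ) ≤ ((β + 1) / 2) ^ n * 2 := by
  refine le_of_mul_le_mul_right ?_ h.pos
  calc ((nonfullWords β a₁ a₂ n).card : ℝ) * a₁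
      = ∑ _ ∈ nonfullWords β a₁ a₂ n, a₁ := by rw [Finset.sum_const, nsmul_eq_mul]
    _ ≤ ∑ w ∈ nonfullWords β a₁ a₂ n, (a₁ + endpoint β a₁ a₂ w) :=
        Finset.sum_le_sum fun w _ => le_add_of_nonneg_right (h.endpoint_mem_Icc w).1
    _ ≤ ((β + 1) / 2) ^ n * 2 * a₁ := (h.sum_add_endpoint_le n).trans_eq (mul_assoc _ _ _).symm

lemma summable_card_nonfullWords (h : Admissible β a₁ a₂) :
    Summable fun n => (β ^ n)⁻¹ * ((nonfullWords β a₁ a₂ n).card : ℝ) := by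
  have hβ := h.beta_pos
  have hθ : (β + 1) / (2 * β) < 1 := (div_lt_one (by positivity)).2 (by linarith [h.one_lt])
  refine .of_nonneg_of_le (fun n => by positivity) (fun n => ?_)
    ((summable_geometric_of_lt_one (by positivity) hθ).mul_right 2)
  calc (β ^ n)⁻¹ * ((nonfullWords β a₁ a₂ n).card : ℝ)
      ≤ (β ^ n)⁻¹ * (((β + 1) / 2) ^ n * 2) := by
        gcongr
        exact h.card_nonfullWords_le n
    _ = ((β + 1) / (2 * β)) ^ n * 2 := by
        rw [← mul_assoc, ← inv_pow, ← mul_pow]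
        congr 2
        field_simp

lemma levelMeasure_zero : levelMeasure β a₁ a₂ 0 = volume.restrict (Ico 0 a₁) := by
  simp [levelMeasure, nonfullWords, endpoint]

lemma map_levelMeasure (h : Admissible β a₁ a₂) (n : ℕ) :
    ∃ c : ENNReal, (levelMeasure β a₁ a₂ n).map (greedyT β a₁ a₂) =
      levelMeasure β a₁ a₂ (n + 1) + c • volume.restrict (Ico 0 a₁) := by
  set k : ENNReal := ENNReal.ofReal (β ^ (n + 1))⁻¹ with hk
  have hkn : ENNReal.ofReal (β ^ n)⁻¹ * ENNReal.ofReal β⁻¹ = k := by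
    rw [hk, ← ENNReal.ofReal_mul (inv_pos.2 (pow_pos h.beta_pos n)).le, pow_succ, mul_inv]
  refine ⟨k * (∑ w ∈ nonfullWords β a₁ a₂ n,
    (fullDigits β a₁ a₂ (endpoint β a₁ a₂ w)).card : ℕ), ?_⟩
  calc (levelMeasure β a₁ a₂ n).map (greedyT β a₁ a₂)
      = k • ∑ w ∈ nonfullWords β a₁ a₂ n, ∑ b ∈ digits a₁ a₂,
          volume.restrict (Ico 0 (step β a₁ a₂ (endpoint β a₁ a₂ w) b)) := by
        rw [levelMeasure, Measure.map_smul,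
          Measure.map_finset_sum measurable_greedyT.aemeasurable, ← hkn, mul_smul,
          Finset.smul_sum (r := ENNReal.ofReal β⁻¹)]
        simp only [h.map_restrict_Ico (h.endpoint_mem_Icc _).2]
    _ = levelMeasure β a₁ a₂ (n + 1) + _ := by
        simp only [h.sum_digits_step (f := fun t => volume.restrict (Ico 0 t)) (by simp),
          Finset.sum_add_distrib, levelMeasure, sum_nonfullWords_succ, endpoint_append_singleton,
          smul_add, ← Finset.sum_smul, mul_smul, Nat.cast_smul_eq_nsmul, hk]

lemma levelDensity_zero {x : ℝ} (hx : x ∈ Ico 0 a₁) : levelDensity β a₁ a₂ 0 x = 1 := by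
  simp [levelDensity, nonfullWords, endpoint, hx]

lemma levelDensity_nonneg (h : Admissible β a₁ a₂) (n : ℕ) (x : ℝ) :
    0 ≤ levelDensity β a₁ a₂ n x :=
  Finset.sum_nonneg fun _ _ => indicator_nonneg
    (fun _ _ => inv_nonneg.2 (pow_nonneg h.beta_pos.le n)) x

lemma measurable_levelDensity (n : ℕ) : Measurable (levelDensity β a₁ a₂ n) :=
  Finset.measurable_fun_sum _ fun _ _ => measurable_const.indicator measurableSet_Ico

lemma summable_levelDensity (h : Admissible β a₁ a₂) (x : ℝ) :
    Summable fun n => levelDensity β a₁ a₂ n x := by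
  refine h.summable_card_nonfullWords.of_nonneg_of_le (fun n => h.levelDensity_nonneg n x)
    fun n => ?_
  rw [mul_comm, ← nsmul_eq_mul]
  exact Finset.sum_le_card_nsmul _ _ _ fun w _ => indicator_le_self'
    (fun _ _ => inv_nonneg.2 (pow_nonneg h.beta_pos.le n)) x

lemma levelDensity_succ (h : Admissible β a₁ a₂) (n : ℕ) (x : ℝ) :
    levelDensity β a₁ a₂ (n + 1) x = ∑' w : {w : List ℝ // memB β a₁ a₂ (n + 1) w},
      ((greedyT β a₁ a₂)^[n + 1] '' cyl β a₁ a₂ w.1).indicator (fun _ => (β ^ (n + 1))⁻¹) x := by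
  set f : List ℝ → ℝ := fun w =>
    ((greedyT β a₁ a₂)^[n + 1] '' cyl β a₁ a₂ w).indicator (fun _ => (β ^ (n + 1))⁻¹) x
  have hset : {w | memB β a₁ a₂ (n + 1) w} = ↑(nonfullWords β a₁ a₂ (n + 1)) := by
    ext w
    exact h.mem_nonfullWords.symm
  refine Eq.trans ?_ ((tsum_congr_set_coe f hset).trans (Finset.tsum_subtype' _ f)).symm
  refine Finset.sum_congr rfl fun w hw => ?_
  obtain ⟨hlen, hword, -⟩ := h.mem_nonfullWords.1 hw
  have himage := h.image_iterate_cyl hword (List.ne_nil_of_length_eq_add_one hlen)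
  rw [hlen] at himage
  simp only [f, himage]

lemma phi_eq_tsum_levelDensity (h : Admissible β a₁ a₂) {x : ℝ} (hx : x ∈ Ico 0 a₁) :
    phi β a₁ a₂ x = ∑' n, levelDensity β a₁ a₂ n x := by
  rw [(h.summable_levelDensity x).tsum_eq_zero_add, levelDensity_zero hx, phi]
  simp only [h.levelDensity_succ]

lemma withDensity_levelDensity (h : Admissible β a₁ a₂) (n : ℕ) :
    (volume.restrict (Ico 0 a₁)).withDensity (fun x => ENNReal.ofReal (levelDensity β a₁ a₂ n x)) =
      levelMeasure β a₁ a₂ n := by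
  have hdensity : ∀ x, ENNReal.ofReal (levelDensity β a₁ a₂ n x) = ∑ w ∈ nonfullWords β a₁ a₂ n,
      (Ico 0 (endpoint β a₁ a₂ w)).indicator (fun _ => ENNReal.ofReal (β ^ n)⁻¹) x := fun x => by
    rw [levelDensity, ENNReal.ofReal_sum_of_nonneg fun _ _ => indicator_nonneg
      (fun _ _ => inv_nonneg.2 (pow_nonneg h.beta_pos.le n)) x]
    simp only [indicator_apply, apply_ite ENNReal.ofReal, ENNReal.ofReal_zero]
  have hsub : ∀ w, Ico 0 (endpoint β a₁ a₂ w) ∩ Ico 0 a₁ = Ico 0 (endpoint β a₁ a₂ w) := fun w =>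
    inter_eq_left.2 (Ico_subset_Ico_right (h.endpoint_mem_Icc w).2)
  ext s hs
  simp only [hdensity, withDensity_apply _ hs]
  rw [lintegral_finsetSum _ fun _ _ => measurable_const.indicator measurableSet_Ico]
  simp only [lintegral_indicator_const measurableSet_Ico, Measure.restrict_restrict hs,
    Measure.restrict_apply measurableSet_Ico, levelMeasure, Measure.smul_apply,
    Measure.finsetSum_apply, Measure.restrict_apply hs, smul_eq_mul, Finset.mul_sum]
  refine Finset.sum_congr rfl fun w _ => ?_
  rw [inter_left_comm, hsub]

lemma muMeas_eq_sum (h : Admissible β a₁ a₂) :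
    muMeas β a₁ a₂ = Measure.sum (levelMeasure β a₁ a₂) := by
  rw [← funext h.withDensity_levelDensity,
    ← withDensity_tsum fun n => (measurable_levelDensity n).ennreal_ofReal, muMeas]
  refine withDensity_congr_ae ?_
  filter_upwards [ae_restrict_mem measurableSet_Ico] with x hx
  rw [h.phi_eq_tsum_levelDensity hx, ENNReal.ofReal_tsum_of_nonneg
    (fun n => h.levelDensity_nonneg n x) (h.summable_levelDensity x), ENNReal.tsum_apply]

lemma levelMeasure_univ_le (h : Admissible β a₁ a₂) (n : ℕ) :
    levelMeasure β a₁ a₂ n univ ≤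
      ENNReal.ofReal ((β ^ n)⁻¹ * (nonfullWords β a₁ a₂ n).card * a₁) := by
  have hpow : 0 ≤ (β ^ n)⁻¹ := inv_nonneg.2 (pow_nonneg h.beta_pos.le n)
  rw [mul_assoc, ENNReal.ofReal_mul hpow, ← nsmul_eq_mul, ENNReal.ofReal_nsmul, levelMeasure,
    Measure.smul_apply, smul_eq_mul, Measure.finsetSum_apply]
  gcongr
  refine Finset.sum_le_card_nsmul _ _ _ fun w _ => ?_
  rw [Measure.restrict_apply_univ, Real.volume_Ico, sub_zero]
  exact ENNReal.ofReal_le_ofReal (h.endpoint_mem_Icc w).2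

lemma isFiniteMeasure_muMeas (h : Admissible β a₁ a₂) : IsFiniteMeasure (muMeas β a₁ a₂) := by
  rw [h.muMeas_eq_sum]
  refine ⟨?_⟩
  rw [Measure.sum_apply _ MeasurableSet.univ]
  refine (ENNReal.tsum_le_tsum h.levelMeasure_univ_le).trans_lt ?_
  rw [← ENNReal.ofReal_tsum_of_nonneg _ (h.summable_card_nonfullWords.mul_right a₁)]
  · exact ENNReal.ofReal_lt_top
  · have := h.beta_pos
    have := h.pos
    exact fun n => by positivity

lemma neZero_volume_restrict (h : Admissible β a₁ a₂) : NeZero (volume.restrict (Ico 0 a₁)) :=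
  ⟨by simp [Measure.restrict_eq_zero, h.pos]⟩

lemma neZero_muMeas (h : Admissible β a₁ a₂) : NeZero (muMeas β a₁ a₂) := by
  have := h.neZero_volume_restrict
  refine ⟨fun hzero => NeZero.ne (volume.restrict (Ico 0 a₁)) ?_⟩
  rw [h.muMeas_eq_sum, Measure.sum_eq_zero] at hzero
  rw [← levelMeasure_zero, hzero 0]

lemma measurePreserving_muMeas (h : Admissible β a₁ a₂) :
    MeasurePreserving (greedyT β a₁ a₂) (muMeas β a₁ a₂) (muMeas β a₁ a₂) := by
  have := h.isFiniteMeasure_muMeas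
  have := h.neZero_volume_restrict
  choose c hc using h.map_levelMeasure
  refine ⟨measurable_greedyT, map_eq_of_map_add_eq_add_smul (ρ := volume.restrict (Ico 0 a₁))
    (c := ∑' n, c n) measurable_greedyT ?_⟩
  rw [h.muMeas_eq_sum]
  ext s hs
  have hlevel : ∀ n, levelMeasure β a₁ a₂ n (greedyT β a₁ a₂ ⁻¹' s) =
      levelMeasure β a₁ a₂ (n + 1) s + c n * volume.restrict (Ico 0 a₁) s := fun n => by
    rw [← Measure.map_apply measurable_greedyT hs, hc, Measure.add_apply, Measure.smul_apply,
      smul_eq_mul]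
  rw [Measure.add_apply, Measure.map_apply measurable_greedyT hs, Measure.add_apply,
    Measure.smul_apply, smul_eq_mul, Measure.sum_apply _ (measurable_greedyT hs),
    Measure.sum_apply _ hs, tsum_congr hlevel, ENNReal.tsum_add, ENNReal.tsum_mul_right,
    tsum_eq_zero_add' (f := fun n => levelMeasure β a₁ a₂ n s) ENNReal.summable,
    levelMeasure_zero]
  ring

lemma ergodic_muMeas (h : Admissible β a₁ a₂) : Ergodic (greedyT β a₁ a₂) (muMeas β a₁ a₂) where
  toMeasurePreserving := h.measurePreserving_muMeas
  aeconst_set _ hs hinv := (h.preErgodic_restrict.aeconst_set hs hinv).anti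
    (withDensity_absolutelyContinuous _ _).ae_le

end Admissible
end GreedyBeta

/-- The greedy β-transformation `T` is ergodic with respect to
the probability measure `μ/μ([0, a₁))`: `T` preserves this probability measure
and every Borel set `E ⊆ [0, a₁)` with `T⁻¹E = E` (within `[0, a₁)`) has
measure `0` or `1`. -/
theorem stmt15 (β a₁ a₂ : ℝ) (hβ1 : 1 < β) (hβ3 : β < 3)
    (ha₁ : 0 < a₁) (h12 : a₁ < a₂) (hc : condition6 β a₁ a₂) :
    IsProbabilityMeasure ((muMeas β a₁ a₂ Set.univ)⁻¹ • muMeas β a₁ a₂) ∧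
    (∀ E : Set ℝ, E ⊆ Set.Ico 0 a₁ → MeasurableSet E →
      ((muMeas β a₁ a₂ Set.univ)⁻¹ • muMeas β a₁ a₂) (greedyT β a₁ a₂ ⁻¹' E) =
        ((muMeas β a₁ a₂ Set.univ)⁻¹ • muMeas β a₁ a₂) E) ∧
    (∀ E : Set ℝ, E ⊆ Set.Ico 0 a₁ → MeasurableSet E →
      greedyT β a₁ a₂ ⁻¹' E ∩ Set.Ico 0 a₁ = E →
      ((muMeas β a₁ a₂ Set.univ)⁻¹ • muMeas β a₁ a₂) E = 0 ∨
      ((muMeas β a₁ a₂ Set.univ)⁻¹ • muMeas β a₁ a₂) E = 1) := by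
  have h : GreedyBeta.Admissible β a₁ a₂ := ⟨ha₁, hc⟩
  have := h.isFiniteMeasure_muMeas
  have := h.neZero_muMeas
  have herg := h.ergodic_muMeas.smul_measure (muMeas β a₁ a₂ univ)⁻¹
  refine ⟨inferInstance, fun E _ hE => herg.measure_preimage hE.nullMeasurableSet,
    fun E _ hE hinv => ?_⟩
  have hmem : ∀ᵐ x ∂(muMeas β a₁ a₂ univ)⁻¹ • muMeas β a₁ a₂, x ∈ Ico 0 a₁ :=
    Measure.ae_smul_measure ((withDensity_absolutelyContinuous _ _).ae_le
      (ae_restrict_mem measurableSet_Ico)) _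
  have hinv' : greedyT β a₁ a₂ ⁻¹' E =ᵐ[(muMeas β a₁ a₂ univ)⁻¹ • muMeas β a₁ a₂] E :=
    (inter_ae_eq_left_of_ae_eq_univ (Filter.eventuallyEq_univ.2 hmem)).symm.trans
      hinv.eventuallyEq
  rcases herg.quasiErgodic.ae_empty_or_univ₀ hE.nullMeasurableSet hinv' with h₀ | h₁
  · exact .inl (by rw [measure_congr h₀, measure_empty])
  · exact .inr (by rw [measure_congr h₁, measure_univ])
end
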